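/- arXiv:1009.6139 — 5 statements merged into one kernel-verified Lean document; each statement's English description precedes it below -/
import Mathlib

section
/- Let p ≥ 5 be a prime. The quartic equation x⁴ + x² − Tx − 1/12 = 0 has exactly one root u in F(p); this root satisfies |u| < 1 and its power series expansion begins u = −1/(12T) + 1/(12²T³) + ⋯ (in particular the coefficient of T⁻¹ is −1/12). -/
/-!
Put `X = 1/T` and `c = 1/12`.  Multiplying the quartic by `X` turns it into the fixed point
equation `u = X * (u ^ 4 + u ^ 2 - c)`.

A Laurent series of negative order cannot solve it, because `u ^ 4` would be the only term of
lowest order (`order_nonneg_of_root`), so every root is a power series.  On power series the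
right-hand side is a contraction for the `X`-adic topology (`phi_sub_phi`): the fixed point
exists as the limit of the iterates of `0` (`exists_fixed`) and is unique (`fixed_unique`).
Finally a fixed point is `X * g` with `g = -c + X ^ 2 * (g ^ 2 + X ^ 2 * g ^ 4)`, from which the
first three coefficients are read off (`fixed_coeffs`).
-/

noncomputable section
open Polynomial

def Tval (F : Type) [Field F] : LaurentSeries F :=
  (HahnSeries.single (1 : ℤ) (1 : F) : LaurentSeries F)⁻¹

def adeg {F : Type} [Field F] (α : LaurentSeries F) : ℤ := -α.order

def pEval {F : Type} [Field F] (f : Polynomial F) : LaurentSeries F :=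
  f.eval₂ HahnSeries.C (Tval F)

def pEvalHom (F : Type) [Field F] : Polynomial F →+* LaurentSeries F :=
  Polynomial.eval₂RingHom HahnSeries.C (Tval F)

/-- substitution `T ↦ v T` on Laurent series in `1/T`
(the underlying Hahn-series variable is `1/T`). -/
def scaleT {F : Type} [Field F] (v : F) (α : LaurentSeries F) : LaurentSeries F where
  coeff n := v ^ (-n) * α.coeff n
  isPWO_support' := α.isPWO_support'.mono (fun n hn => by
    simp only [Function.mem_support, ne_eq] at hn ⊢
    intro h; exact hn (by rw [h, mul_zero]))

/-- coefficient-wise map of Laurent series along a ring homomorphism. -/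
def lsMap {F L : Type} [Field F] [Field L] (f : F →+* L) (α : LaurentSeries F) :
    LaurentSeries L where
  coeff n := f (α.coeff n)
  isPWO_support' := α.isPWO_support'.mono (fun n hn => by
    simp only [Function.mem_support, ne_eq] at hn ⊢
    intro h; exact hn (by rw [h, map_zero]))

/-- integral (polynomial) part of a Laurent series in `1/T`. -/
def intPart {F : Type} [Field F] (α : LaurentSeries F) : Polynomial F :=
  ∑ j ∈ Finset.range ((-α.order).toNat + 1),
    Polynomial.C (α.coeff (-(j : ℤ))) * Polynomial.X ^ j

def IsCFOf {F : Type} [Field F] (α : LaurentSeries F) (a : ℕ → Polynomial F)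
    (β : ℕ → LaurentSeries F) : Prop :=
  β 1 = α ∧ ∀ n, 1 ≤ n →
    0 < (a n).degree ∧ 0 < adeg (β n) ∧ β n = pEval (a n) + (β (n + 1))⁻¹

def fcf {F : Type} [DivisionRing F] : List F → F
  | [] => 0
  | [c] => c
  | c :: d :: t => c + (fcf (d :: t))⁻¹

def fcfWD {F : Type} [DivisionRing F] : List F → Prop
  | [] => True
  | [_] => True
  | _ :: d :: t => fcf (d :: t) ≠ 0 ∧ fcfWD (d :: t)

def polyInt {F : Type} [Field F] (f : Polynomial F) : Polynomial F :=
  ∑ i ∈ Finset.range (f.natDegree + 1),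
    Polynomial.C (f.coeff i * ((i : F) + 1)⁻¹) * Polynomial.X ^ (i + 1)

def Pka {F : Type} [Field F] (k : ℕ) (a : F) : Polynomial F :=
  (Polynomial.X ^ 2 + Polynomial.C a) ^ k

def Qka {F : Type} [Field F] (k : ℕ) (a : F) : Polynomial F := polyInt (Pka (k - 1) a)

def Pk {F : Type} [Field F] (k : ℕ) : Polynomial F := (Polynomial.X ^ 2 - 1) ^ k

def Qk {F : Type} [Field F] (k : ℕ) : Polynomial F := polyInt (Pk (k - 1))

def Aseq (F : Type) [Field F] (p k : ℕ) : ℕ → Polynomial F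
  | 0 => Polynomial.X
  | i + 1 => Aseq F p k i ^ p / Pk k

def vseq (F : Type) [Field F] (k : ℕ) : ℕ → F
  | 0 => 1
  | 1 => 2 * k - 1
  | i + 1 =>
      (((2 * (k : ℤ) - 2 * i - 1) * (2 * (k : ℤ) - 2 * i + 1) : ℤ) : F) *
        (((i : F) * (2 * k - i))⁻¹) * (vseq F k i)⁻¹

def theta (F : Type) [Field F] (k : ℕ) : F :=
  (-1) ^ k * ∏ j ∈ Finset.Icc 1 k, (1 - (2 * (j : F))⁻¹)

def continuant {R : Type} [CommRing R] (a : ℕ → R) (c0 c1 : R) : ℕ → R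
  | 0 => c0
  | 1 => c1
  | n + 2 => a (n + 2) * continuant a c0 c1 (n + 1) + continuant a c0 c1 n

def largestPow (m N : ℕ) : ℕ := sSup {j : ℕ | m ^ j ∣ N}

def nu0 {F : Type} [Field F] (a : ℕ → Polynomial F) : ℝ :=
  Filter.limsup
    (fun n => ((a (n + 1)).natDegree : ℝ) / ∑ j ∈ Finset.Icc 1 n, ((a j).natDegree : ℝ))
    Filter.atTop

/-- The map `f ↦ X (f⁴ + f² - c)` on power series in `X = 1/T`, whose fixed points are the
integral roots of `x⁴ + x² - T x - c`. -/
def phi {F : Type} [Field F] (c : F) (f : PowerSeries F) : PowerSeries F :=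
  PowerSeries.X * (f ^ 4 + f ^ 2 - PowerSeries.C c)

/-- `phi c` contracts the `X`-adic distance by a factor `X`. -/
lemma phi_sub_phi {F : Type} [Field F] (c : F) (f g : PowerSeries F) :
    phi c f - phi c g =
      PowerSeries.X * ((f - g) * ((f + g) * (f ^ 2 + g ^ 2) + (f + g))) := by
  unfold phi; ring

lemma fixed_unique {F : Type} [Field F] (c : F) (f g : PowerSeries F)
    (hf : f = phi c f) (hg : g = phi c g) : f = g := by
  have h := phi_sub_phi c f g
  rw [← hf, ← hg] at h
  have h2 : (f - g) * (1 - PowerSeries.X * ((f + g) * (f ^ 2 + g ^ 2) + (f + g))) = 0 := by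
    linear_combination h
  rcases mul_eq_zero.mp h2 with h3 | h3
  · exact sub_eq_zero.mp h3
  · -- the second factor has constant coefficient `1`
    have := congrArg PowerSeries.constantCoeff h3
    simp at this

lemma exists_fixed {F : Type} [Field F] (c : F) : ∃ f : PowerSeries F, f = phi c f := by
  let s : ℕ → PowerSeries F := fun n => (phi c)^[n] 0
  have hs : ∀ n, s (n + 1) = phi c (s n) := fun n => Function.iterate_succ_apply' _ _ _
  have hstep : ∀ n, (PowerSeries.X : PowerSeries F) ^ n ∣ s (n + 1) - s n := by
    intro n
    induction n with
    | zero => simp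
    | succ n ih =>
      rw [hs (n + 1), hs n, phi_sub_phi, ← hs n, pow_succ']
      exact mul_dvd_mul_left _ (Dvd.dvd.mul_right ih _)
  have hle : ∀ n k, (PowerSeries.X : PowerSeries F) ^ n ∣ s (n + k) - s n := by
    intro n k
    induction k with
    | zero => simp
    | succ k ih =>
      have h1 : (PowerSeries.X : PowerSeries F) ^ n ∣ s (n + k + 1) - s (n + k) :=
        (pow_dvd_pow _ (Nat.le_add_right n k)).trans (hstep _)
      have := dvd_add h1 ih
      rwa [sub_add_sub_cancel] at this
  -- the coefficient of index `n` is stationary from the iterate `n + 1` on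
  let f : PowerSeries F := PowerSeries.mk fun n => PowerSeries.coeff n (s (n + 1))
  have hf : ∀ n, (PowerSeries.X : PowerSeries F) ^ n ∣ f - s n := by
    intro n
    rw [PowerSeries.X_pow_dvd_iff]
    intro m hm
    obtain ⟨k, rfl⟩ := Nat.exists_eq_add_of_lt hm
    have h := (PowerSeries.X_pow_dvd_iff.mp (hle (m + 1) k)) m (Nat.lt_succ_self m)
    rw [map_sub, sub_eq_zero] at h
    rw [map_sub, PowerSeries.coeff_mk, sub_eq_zero, ← h]
    congr 2
    ring
  refine ⟨f, ?_⟩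
  rw [← sub_eq_zero]
  have hall : ∀ n, (PowerSeries.X : PowerSeries F) ^ n ∣ f - phi c f := by
    intro n
    have h1 := (pow_dvd_pow (PowerSeries.X : PowerSeries F) (Nat.le_succ n)).trans (hf (n + 1))
    have h2 : (PowerSeries.X : PowerSeries F) ^ n ∣ phi c f - phi c (s n) := by
      rw [phi_sub_phi]
      exact Dvd.dvd.mul_left (Dvd.dvd.mul_right (hf n) _) _
    have := dvd_sub h1 h2
    rwa [hs, sub_sub_sub_cancel_right] at this
  ext n
  rw [map_zero]
  exact PowerSeries.X_pow_dvd_iff.mp (hall (n + 1)) n (Nat.lt_succ_self n)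

lemma fixed_coeffs {F : Type} [Field F] (c : F) (f : PowerSeries F) (hf : f = phi c f) :
    PowerSeries.coeff 0 f = 0 ∧ PowerSeries.coeff 1 f = -c ∧ PowerSeries.coeff 2 f = 0 ∧
      PowerSeries.coeff 3 f = c ^ 2 := by
  obtain ⟨g, hg⟩ : ∃ g, f = PowerSeries.X * g := ⟨_, hf⟩
  have hg2 : g = PowerSeries.X ^ 2 * (g ^ 2 + PowerSeries.X ^ 2 * g ^ 4) - PowerSeries.C c := by
    have h : PowerSeries.X * g = PowerSeries.X *
        (PowerSeries.X ^ 2 * (g ^ 2 + PowerSeries.X ^ 2 * g ^ 4) - PowerSeries.C c) := by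
      rw [← hg, hf, phi, hg]; ring
    exact mul_left_cancel₀ PowerSeries.X_ne_zero h
  have h0 : PowerSeries.coeff 0 g = -c := by
    rw [hg2, map_sub, PowerSeries.coeff_X_pow_mul']; simp
  have h1 : PowerSeries.coeff 1 g = 0 := by
    rw [hg2, map_sub, PowerSeries.coeff_X_pow_mul', PowerSeries.coeff_C]; simp
  have h2 : PowerSeries.coeff 2 g = c ^ 2 := by
    have h0' : PowerSeries.constantCoeff g = -c := by simpa using h0
    rw [hg2, map_sub, PowerSeries.coeff_X_pow_mul', PowerSeries.coeff_C]; simp [h0']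
  rw [hg]
  refine ⟨by simp, ?_, ?_, ?_⟩
  · rw [PowerSeries.coeff_succ_X_mul, h0]
  · rw [PowerSeries.coeff_succ_X_mul, h1]
  · rw [PowerSeries.coeff_succ_X_mul, h2]

/-- Clearing the denominator `T = X⁻¹` in the quartic. -/
lemma root_iff {F : Type} [Field F] (c : F) (u : LaurentSeries F) :
    u ^ 4 + u ^ 2 - Tval F * u - HahnSeries.C c = 0 ↔
      u = HahnSeries.single 1 1 * (u ^ 4 + u ^ 2 - HahnSeries.C c) := by
  have hX : (HahnSeries.single (1 : ℤ) (1 : F) : LaurentSeries F) ≠ 0 := by simp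
  have hT : HahnSeries.single (1 : ℤ) (1 : F) * Tval F = 1 := mul_inv_cancel₀ hX
  constructor
  · intro h
    linear_combination (-HahnSeries.single (1 : ℤ) (1 : F)) * h - u * hT
  · intro h
    have : HahnSeries.single (1 : ℤ) (1 : F) *
        (u ^ 4 + u ^ 2 - Tval F * u - HahnSeries.C c) = 0 := by
      linear_combination -h - u * hT
    exact (mul_eq_zero.mp this).resolve_left hX

lemma coe_root_iff {F : Type} [Field F] (c : F) (f : PowerSeries F) :
    ((f : LaurentSeries F) ^ 4 + (f : LaurentSeries F) ^ 2 - Tval F * (f : LaurentSeries F)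
      - HahnSeries.C c = 0) ↔ f = phi c f := by
  rw [root_iff, ← PowerSeries.coe_X, ← PowerSeries.coe_C, ← PowerSeries.coe_pow,
    ← PowerSeries.coe_pow, ← PowerSeries.coe_add, ← PowerSeries.coe_sub, ← PowerSeries.coe_mul]
  exact HahnSeries.ofPowerSeries_injective.eq_iff

lemma order_nonneg_of_root {F : Type} [Field F] (c : F) (u : LaurentSeries F)
    (hu : u = HahnSeries.single 1 1 * (u ^ 4 + u ^ 2 - HahnSeries.C c)) : 0 ≤ u.order := by
  by_contra! hneg
  have hu0 : u ≠ 0 := by rintro rfl; simp at hneg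
  obtain ⟨k, hk⟩ : ∃ k : ℕ, u.order = -((k : ℤ) + 1) := ⟨(-u.order - 1).toNat, by omega⟩
  -- `u = X ^ (-(k + 1)) * v` with `v` a unit power series
  set v := u.powerSeriesPart with hv
  have hvu : (v : LaurentSeries F) = HahnSeries.single 1 1 ^ (k + 1) * u := by
    rw [hv, LaurentSeries.ofPowerSeries_powerSeriesPart, hk, neg_neg, HahnSeries.single_pow]
    simp
  have hX : (HahnSeries.single (1 : ℤ) (1 : F) : LaurentSeries F) ≠ 0 := by simp
  have key : v ^ 4 + PowerSeries.X ^ (2 * k + 2) * v ^ 2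
      - PowerSeries.X ^ (4 * k + 4) * PowerSeries.C c = PowerSeries.X ^ (3 * k + 2) * v := by
    apply HahnSeries.ofPowerSeries_injective (Γ := ℤ)
    simp only [map_add, map_sub, map_mul, map_pow, PowerSeries.coe_X, PowerSeries.coe_C, hvu]
    apply mul_left_cancel₀ hX
    linear_combination (-HahnSeries.single (1 : ℤ) (1 : F) ^ (4 * k + 4)) * hu
  have h0 := congrArg PowerSeries.constantCoeff key
  simp at h0
  have h1 : PowerSeries.coeff 0 v = 0 := by simpa using h0
  rw [hv, LaurentSeries.powerSeriesPart_coeff] at h1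
  exact hu0 (HahnSeries.coeff_order_eq_zero.mp (by simpa using h1))

lemma exists_powerSeries_of_root {F : Type} [Field F] (c : F) (u : LaurentSeries F)
    (hu : u ^ 4 + u ^ 2 - Tval F * u - HahnSeries.C c = 0) :
    ∃ f : PowerSeries F, u = f ∧ f = phi c f := by
  have hord := order_nonneg_of_root c u ((root_iff c u).mp hu)
  obtain ⟨n, hn⟩ := Int.eq_ofNat_of_zero_le hord
  have h := LaurentSeries.X_order_mul_powerSeriesPart hn.symm
  refine ⟨_, h.symm, ?_⟩
  rw [← coe_root_iff, h]
  exact hu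

/-- For a prime `p ≥ 5`, the quartic `x⁴ + x² − Tx − 1/12 = 0` has exactly
one root `u` in `F(p)`; this root satisfies `|u| < 1` and its expansion begins
`u = −1/(12T) + 1/(12²T³) + ⋯` (in particular the coefficient of `T⁻¹` is `−1/12`). -/
theorem stmt0 (p : ℕ) [Fact p.Prime] (hp : 5 ≤ p) :
    (∃! u : LaurentSeries (ZMod p),
        u ^ 4 + u ^ 2 - Tval (ZMod p) * u - (12 : LaurentSeries (ZMod p))⁻¹ = 0) ∧
    ∀ u : LaurentSeries (ZMod p),
      u ^ 4 + u ^ 2 - Tval (ZMod p) * u - (12 : LaurentSeries (ZMod p))⁻¹ = 0 →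
      u ≠ 0 ∧ adeg u < 0 ∧ u.coeff 1 = -(12 : ZMod p)⁻¹ ∧ u.coeff 2 = 0 ∧
        u.coeff 3 = ((12 : ZMod p) ^ 2)⁻¹ := by
  have h5 : (12 : ZMod p) ≠ 0 := by
    intro h
    have h' : ((12 : ℕ) : ZMod p) = 0 := by exact_mod_cast h
    rw [ZMod.natCast_eq_zero_iff] at h'
    have hpp : p.Prime := Fact.out
    have h2 : p ∣ 2 ^ 2 * 3 := by simpa using h'
    rcases (hpp.dvd_mul).mp h2 with h3 | h3
    · have := Nat.le_of_dvd (by norm_num) (hpp.dvd_of_dvd_pow h3); omega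
    · have := Nat.le_of_dvd (by norm_num) h3; omega
  have h12 : (12 : LaurentSeries (ZMod p))⁻¹ = HahnSeries.C ((12 : ZMod p)⁻¹) := by
    rw [map_inv₀, map_ofNat]
  rw [h12]
  constructor
  · obtain ⟨f, hf⟩ := exists_fixed ((12 : ZMod p)⁻¹)
    refine ⟨f, (coe_root_iff _ f).mpr hf, ?_⟩
    intro w hw
    obtain ⟨g, rfl, hg⟩ := exists_powerSeries_of_root _ w hw
    rw [fixed_unique _ g f hg hf]
  · intro u hu
    obtain ⟨f, rfl, hf⟩ := exists_powerSeries_of_root _ u hu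
    obtain ⟨c0, c1, c2, c3⟩ := fixed_coeffs _ f hf
    have d0 := (LaurentSeries.coeff_coe_powerSeries f 0).trans c0
    have d1 := (LaurentSeries.coeff_coe_powerSeries f 1).trans c1
    have d2 := (LaurentSeries.coeff_coe_powerSeries f 2).trans c2
    have d3 := (LaurentSeries.coeff_coe_powerSeries f 3).trans c3
    have hne : (f : LaurentSeries (ZMod p)) ≠ 0 := by
      intro h
      rw [h] at d1
      simp [h5] at d1
    refine ⟨hne, ?_, d1, d2, by rw [← inv_pow]; exact d3⟩
    have hord := order_nonneg_of_root _ _ ((root_iff _ _).mp hu)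
    have hord0 : (f : LaurentSeries (ZMod p)).order ≠ 0 := by
      intro h
      apply hne
      rw [← HahnSeries.coeff_order_eq_zero, h]
      exact d0
    unfold adeg
    omega
end
end

section
/- Let p ≥ 5 be a prime and u the unique root in F(p) of x⁴ + x² − Tx − 1/12 = 0. Then u is an odd function of T (i.e. −u(−T) is also a solution, so u(−T) = −u(T) and only odd powers of T occur in its expansion), and consequently every partial quotient of the continued fraction expansion of α = 1/u is an odd polynomial in F_p[T]; in particular the first partial quotient is a₁ = −12T. -/
/-! The quartic has only one root in the field of Laurent series in `1/T`: comparing orders shows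
that a root must have positive order (`root_addVal_pos`), and if two roots were different, dividing
the difference of their equations by the difference of the roots would write `T` as a sum of terms
of positive order (`root_unique`). The substitution `T ↦ -T` is a ring endomorphism `flipHom`, and
it sends a root `u` to the negative of a root, so `u(-T) = -u(T)` (`root_odd`).

Oddness passes along a continued fraction. The complete quotients satisfy
`β n = a n + 1 / β (n + 1)`, where `a n` collects the coefficients of the non-negative powers of `T`
and `1 / β (n + 1)` the others. If only odd powers occur in `β n`, the same holds for both summands,
hence for `β (n + 1)` as well (`IsCFOf.flip_eq_neg`). Finally the equation reads
`1 / u = 12 (u³ + u - T)`, and `u³ + u` has positive order, so `a 1 = -12 T`. -/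

noncomputable section
open Polynomial

/-! ### The substitution `T ↦ -T` -/

/-- The substitution `T ↦ -T`, bundled as a ring endomorphism of the field of Laurent series. -/
def flipHom (F : Type) [Field F] : LaurentSeries F →+* LaurentSeries F where
  toFun := scaleT (-1)
  map_one' := by
    ext n
    by_cases h : n = 0 <;> simp [scaleT, HahnSeries.coeff_one, h]
  map_zero' := by
    ext n
    simp [scaleT]
  map_add' x y := by
    ext n
    simp [scaleT, mul_add]
  map_mul' x y := by
    have hsupp : ∀ z : LaurentSeries F, (scaleT (-1) z).support = z.support := by
      intro z
      ext n
      simp [scaleT, zpow_ne_zero]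
    ext n
    rw [HahnSeries.coeff_mul_left' x.isPWO_support (hsupp x).le]
    simp only [hsupp]
    change (-1 : F) ^ (-n) * (x * y).coeff n = _
    rw [HahnSeries.coeff_mul, Finset.mul_sum]
    refine Finset.sum_congr rfl fun ij hij => ?_
    rw [Finset.mem_antidiagonal] at hij
    change _ = ((-1 : F) ^ (-ij.1) * x.coeff ij.1) * ((-1 : F) ^ (-ij.2) * y.coeff ij.2)
    rw [← hij.2.2, neg_add, zpow_add₀ (by simp)]
    ring

theorem flipHom_apply {F : Type} [Field F] (x : LaurentSeries F) :
    flipHom F x = scaleT (-1) x := rfl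

theorem flipHom_coeff {F : Type} [Field F] (x : LaurentSeries F) (n : ℤ) :
    (flipHom F x).coeff n = (-1) ^ (-n) * x.coeff n := rfl

/-- In characteristic different from two, `x(-T) = -x(T)` means that only odd powers occur. -/
theorem flipHom_eq_neg_iff {F : Type} [Field F] (h2 : (2 : F) ≠ 0) (x : LaurentSeries F) :
    flipHom F x = -x ↔ ∀ m : ℤ, Even m → x.coeff m = 0 := by
  constructor
  · intro h m hm
    have h' := congrArg (fun z : LaurentSeries F => z.coeff m) h
    simp only [flipHom_coeff, HahnSeries.coeff_neg, hm.neg.neg_one_zpow, one_mul] at h'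
    have : (2 : F) * x.coeff m = 0 := by linear_combination h'
    exact (mul_eq_zero.mp this).resolve_left h2
  · intro h
    ext m
    rw [flipHom_coeff, HahnSeries.coeff_neg]
    rcases Int.even_or_odd m with hm | hm
    · simp [h m hm]
    · rw [hm.neg.neg_one_zpow, neg_one_mul]

/-! ### The variable `T` and polynomials inside the Laurent series -/

theorem Tval_eq (F : Type) [Field F] : Tval F = HahnSeries.single (-1 : ℤ) (1 : F) := by
  rw [Tval, HahnSeries.inv_single, inv_one]

theorem flipHom_Tval (F : Type) [Field F] : flipHom F (Tval F) = -Tval F := by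
  ext n
  rw [flipHom_coeff, Tval_eq, HahnSeries.coeff_neg]
  by_cases h : n = -1
  · subst h
    simp
  · simp [HahnSeries.coeff_single_of_ne h]

theorem pEval_eq_sum {F : Type} [Field F] (f : Polynomial F) :
    pEval f = ∑ i ∈ f.support, HahnSeries.single (-(i : ℤ)) (f.coeff i) := by
  rw [pEval, Polynomial.eval₂_eq_sum, Polynomial.sum]
  refine Finset.sum_congr rfl fun i _ => ?_
  rw [Tval_eq, HahnSeries.single_pow, HahnSeries.C_apply, HahnSeries.single_mul_single]
  simp

theorem pEval_coeff_neg {F : Type} [Field F] (f : Polynomial F) (m : ℕ) :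
    (pEval f).coeff (-(m : ℤ)) = f.coeff m := by
  rw [pEval_eq_sum, HahnSeries.coeff_sum]
  simp only [HahnSeries.coeff_single, neg_inj, Nat.cast_inj]
  simpa using Eq.symm

theorem pEval_coeff_of_pos {F : Type} [Field F] (f : Polynomial F) {n : ℤ} (hn : 0 < n) :
    (pEval f).coeff n = 0 := by
  rw [pEval_eq_sum, HahnSeries.coeff_sum]
  refine Finset.sum_eq_zero fun i _ => HahnSeries.coeff_single_of_ne ?_
  omega

/-! ### Orders -/

theorem coeff_of_pos_addVal {F : Type} [Field F] {x : LaurentSeries F}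
    (hx : 0 < HahnSeries.addVal ℤ F x) {n : ℤ} (hn : n ≤ 0) : x.coeff n = 0 := by
  apply HahnSeries.coeff_eq_zero_of_lt_orderTop
  rw [HahnSeries.addVal_apply] at hx
  exact lt_of_le_of_lt (by exact_mod_cast hn) hx

theorem addVal_Tval (F : Type) [Field F] :
    HahnSeries.addVal ℤ F (Tval F) = ((-1 : ℤ) : WithTop ℤ) := by
  rw [HahnSeries.addVal_apply, Tval_eq, HahnSeries.orderTop_single one_ne_zero]

theorem addVal_inv_pos {F : Type} [Field F] {x : LaurentSeries F} (hx : 0 < adeg x) :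
    0 < HahnSeries.addVal ℤ F x⁻¹ := by
  have h0 : x ≠ 0 := by
    rintro rfl
    simp [adeg] at hx
  have h1 := HahnSeries.order_mul h0 (inv_ne_zero h0)
  rw [mul_inv_cancel₀ h0, HahnSeries.order_one] at h1
  rw [HahnSeries.addVal_apply_of_ne (inv_ne_zero h0)]
  rw [adeg] at hx
  exact_mod_cast (by omega : 0 < x⁻¹.order)

theorem addVal_pow_pos {F : Type} [Field F] {x : LaurentSeries F}
    (hx : 0 < HahnSeries.addVal ℤ F x) {n : ℕ} (hn : n ≠ 0) :
    0 < HahnSeries.addVal ℤ F (x ^ n) := by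
  rw [AddValuation.map_pow]
  exact nsmul_pos hx hn

/-! ### The quartic equation -/

/-- A root of the quartic has positive order (as a series in `1/T`): by the Newton polygon, the
remaining roots have degree `1/3` in `T`, so none of them is a Laurent series. -/
theorem root_addVal_pos {F : Type} [Field F] {c : F} (hc : c ≠ 0) {u : LaurentSeries F}
    (hu : u ^ 4 + u ^ 2 - Tval F * u - HahnSeries.C c = 0) :
    0 < HahnSeries.addVal ℤ F u := by
  set v := HahnSeries.addVal ℤ F with hv
  have hu0 : u ≠ 0 := by
    rintro rfl
    apply hc
    simpa using hu
  have hvc : v (HahnSeries.C c) = ((0 : ℤ) : WithTop ℤ) := by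
    rw [hv, HahnSeries.addVal_apply, HahnSeries.C_apply, HahnSeries.orderTop_single hc]
  obtain ⟨d, hd⟩ : ∃ d : ℤ, v u = (d : WithTop ℤ) :=
    ⟨u.order, HahnSeries.addVal_apply_of_ne hu0⟩
  have hpow : ∀ n : ℕ, v (u ^ n) = ((n * d : ℤ) : WithTop ℤ) := by
    intro n
    rw [AddValuation.map_pow, hd, ← WithTop.coe_nsmul, nsmul_eq_mul]
  have hT : v (Tval F * u) = ((-1 + d : ℤ) : WithTop ℤ) := by
    rw [AddValuation.map_mul, hv, addVal_Tval, ← hv, hd, WithTop.coe_add]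
  -- the order of `T u = u⁴ + u² - c` excludes `d = 0`
  have h1 : min (min (4 * d) (2 * d)) 0 ≤ -1 + d := by
    have e : Tval F * u = u ^ 4 + u ^ 2 - HahnSeries.C c := by linear_combination -hu
    have h := v.map_sub (u ^ 4 + u ^ 2) (HahnSeries.C c)
    rw [← e, hT, hvc] at h
    have h' := v.map_add (u ^ 4) (u ^ 2)
    rw [hpow, hpow] at h'
    have := (min_le_min_right _ h').trans h
    exact_mod_cast this
  -- the order of `u⁴ = T u - u² + c` excludes `d < 0`
  have h2 : min (min (-1 + d) (2 * d)) 0 ≤ 4 * d := by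
    have e : u ^ 4 = Tval F * u - u ^ 2 + HahnSeries.C c := by linear_combination hu
    have h := v.map_add (Tval F * u - u ^ 2) (HahnSeries.C c)
    rw [← e, hpow, hvc] at h
    have h' := v.map_sub (Tval F * u) (u ^ 2)
    rw [hT, hpow] at h'
    have := (min_le_min_right _ h').trans h
    exact_mod_cast this
  rw [hd]
  exact_mod_cast (by omega : 0 < d)

/-- Two roots `u`, `w` agree: otherwise dividing the difference of the two equations by `u - w`
expresses `T`, of order `-1`, through terms of positive order. -/
theorem root_unique {F : Type} [Field F] {c : F} (hc : c ≠ 0) {u w : LaurentSeries F}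
    (hu : u ^ 4 + u ^ 2 - Tval F * u - HahnSeries.C c = 0)
    (hw : w ^ 4 + w ^ 2 - Tval F * w - HahnSeries.C c = 0) : u = w := by
  have pu := root_addVal_pos hc hu
  have pw := root_addVal_pos hc hw
  have hmul : (u - w) * (u ^ 3 + u ^ 2 * w + u * w ^ 2 + w ^ 3 + u + w - Tval F) = 0 := by
    linear_combination hu - hw
  rcases mul_eq_zero.mp hmul with h | h
  · exact sub_eq_zero.mp h
  · exfalso
    have pos : 0 < HahnSeries.addVal ℤ F (u ^ 3 + u ^ 2 * w + u * w ^ 2 + w ^ 3 + u + w) := by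
      have pu2 := addVal_pow_pos pu (n := 2) (by norm_num)
      have pw2 := addVal_pow_pos pw (n := 2) (by norm_num)
      have puuw : 0 < HahnSeries.addVal ℤ F (u ^ 2 * w) := by
        rw [AddValuation.map_mul]; exact add_pos_of_pos_of_nonneg pu2 pw.le
      have puww : 0 < HahnSeries.addVal ℤ F (u * w ^ 2) := by
        rw [AddValuation.map_mul]; exact add_pos_of_pos_of_nonneg pu pw2.le
      exact AddValuation.map_lt_add _ (AddValuation.map_lt_add _ (AddValuation.map_lt_add _
        (AddValuation.map_lt_add _ (AddValuation.map_lt_add _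
          (addVal_pow_pos pu (by norm_num)) puuw) puww) (addVal_pow_pos pw (by norm_num))) pu) pw
    rw [sub_eq_zero.mp h, addVal_Tval] at pos
    exact absurd (show (0 : ℤ) < -1 by exact_mod_cast pos) (by norm_num)

theorem root_odd {F : Type} [Field F] {c : F} (hc : c ≠ 0) {u : LaurentSeries F}
    (hu : u ^ 4 + u ^ 2 - Tval F * u - HahnSeries.C c = 0) : flipHom F u = -u := by
  have hC : flipHom F (HahnSeries.C c) = HahnSeries.C c := by
    ext n
    rw [flipHom_coeff, HahnSeries.C_apply]
    by_cases h : n = 0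
    · simp [h]
    · simp [HahnSeries.coeff_single_of_ne h]
  have h := congrArg (flipHom F) hu
  simp only [map_sub, map_add, map_mul, map_pow, map_zero, flipHom_Tval, hC] at h
  have hw : (-flipHom F u) ^ 4 + (-flipHom F u) ^ 2 - Tval F * (-flipHom F u)
      - HahnSeries.C c = 0 := by linear_combination h
  rw [eq_neg_iff_add_eq_zero, add_comm, ← eq_neg_iff_add_eq_zero]
  exact root_unique hc hu hw

/-! ### Continued fractions -/

/-- The partial quotient carries exactly the coefficients of the non-negative powers of `T`. -/
theorem IsCFOf.coeff_eq {F : Type} [Field F] {α : LaurentSeries F} {a : ℕ → Polynomial F}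
    {β : ℕ → LaurentSeries F} (h : IsCFOf α a β) {n : ℕ} (hn : 1 ≤ n) (m : ℕ) :
    (a n).coeff m = (β n).coeff (-(m : ℤ)) := by
  have hpos := addVal_inv_pos (h.2 (n + 1) (by omega)).2.1
  rw [(h.2 n hn).2.2, HahnSeries.coeff_add, pEval_coeff_neg,
    coeff_of_pos_addVal hpos (by omega), add_zero]

/-- All complete quotients of an odd series are odd. -/
theorem IsCFOf.flip_eq_neg {F : Type} [Field F] (h2 : (2 : F) ≠ 0) {α : LaurentSeries F}
    {a : ℕ → Polynomial F} {β : ℕ → LaurentSeries F} (h : IsCFOf α a β)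
    (hα : flipHom F α = -α) {n : ℕ} (hn : 1 ≤ n) : flipHom F (β n) = -β n := by
  induction n, hn using Nat.le_induction with
  | base => rw [h.1, hα]
  | succ n hn ih =>
    have hinv : flipHom F (β (n + 1))⁻¹ = -(β (n + 1))⁻¹ := by
      rw [flipHom_eq_neg_iff h2] at ih ⊢
      intro m hm
      rcases le_or_gt m 0 with h0 | h0
      · exact coeff_of_pos_addVal (addVal_inv_pos (h.2 (n + 1) (by omega)).2.1) h0
      · have e := ih m hm
        rwa [(h.2 n hn).2.2, HahnSeries.coeff_add, pEval_coeff_of_pos _ h0, zero_add] at e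
    rw [map_inv₀, ← inv_neg] at hinv
    exact inv_injective hinv

/-- For a prime `p ≥ 5`, the unique root `u ∈ F(p)` of
`x⁴ + x² − Tx − 1/12 = 0` is an odd function of `T` (`u(−T) = −u(T)`, only odd powers of `T`
occur), and every partial quotient of the continued fraction of `α = 1/u` is an odd
polynomial; in particular `a₁ = −12 T`. -/
theorem stmt1 (p : ℕ) [Fact p.Prime] (hp : 5 ≤ p) (u : LaurentSeries (ZMod p))
    (hu : u ^ 4 + u ^ 2 - Tval (ZMod p) * u - (12 : LaurentSeries (ZMod p))⁻¹ = 0) :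
    scaleT (-1) u = -u ∧
    (∀ m : ℤ, Even m → u.coeff m = 0) ∧
    ∀ (a : ℕ → Polynomial (ZMod p)) (β : ℕ → LaurentSeries (ZMod p)),
      IsCFOf u⁻¹ a β →
      (∀ n, 1 ≤ n → ∀ m : ℕ, Even m → (a n).coeff m = 0) ∧
      a 1 = Polynomial.C (-12) * Polynomial.X := by
  have h12 : (12 : ZMod p) ≠ 0 := by
    intro h
    have hd : p ∣ 12 := (ZMod.natCast_eq_zero_iff 12 p).mp (by exact_mod_cast h)
    have hle := Nat.le_of_dvd (by norm_num) hd
    have hpr := (Fact.out : p.Prime)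
    interval_cases p <;> revert hd hpr <;> norm_num
  have h2 : (2 : ZMod p) ≠ 0 := by
    intro h
    exact h12 (by linear_combination 6 * h)
  have hC12 : (HahnSeries.C (12 : ZMod p) : LaurentSeries (ZMod p)) = 12 := map_ofNat _ 12
  have hc : ((12 : ZMod p)⁻¹) ≠ 0 := inv_ne_zero h12
  have hu' : u ^ 4 + u ^ 2 - Tval (ZMod p) * u - HahnSeries.C (12 : ZMod p)⁻¹ = 0 := by
    rw [map_inv₀, hC12, hu]
  have hpos := root_addVal_pos hc hu'
  have hodd := root_odd hc hu'
  refine ⟨hodd, (flipHom_eq_neg_iff h2 u).mp hodd, fun a β h => ⟨?_, ?_⟩⟩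
  · intro n hn m hm
    rw [h.coeff_eq hn]
    refine (flipHom_eq_neg_iff h2 _).mp (h.flip_eq_neg h2 ?_ hn) _ (by simpa using hm)
    rw [map_inv₀, hodd, inv_neg]
  · have hL12 : (12 : LaurentSeries (ZMod p)) ≠ 0 := by
      rw [← hC12]
      simpa using h12
    have hinv : u⁻¹ = HahnSeries.C (12 : ZMod p) * (u ^ 3 + u - Tval (ZMod p)) := by
      refine inv_eq_of_mul_eq_one_left ?_
      rw [hC12]
      have := mul_inv_cancel₀ hL12
      linear_combination 12 * hu + this
    ext m
    rw [h.coeff_eq le_rfl, h.1, hinv, HahnSeries.C_mul_eq_smul, HahnSeries.coeff_smul,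
      HahnSeries.coeff_sub, HahnSeries.coeff_add,
      coeff_of_pos_addVal (addVal_pow_pos hpos (by norm_num)) (by omega),
      coeff_of_pos_addVal hpos (by omega), Tval_eq, Polynomial.coeff_C_mul_X,
      HahnSeries.coeff_single]
    by_cases hm : m = 1
    · simp [hm]
    · simp [hm]
end
end

section
/- Let p ≥ 5 be a prime and P(X) = X⁴ + X² − TX − 1/12 ∈ F_p(T)[X]. Set r = p if p ≡ 1 (mod 3) and r = p² if p ≡ 2 (mod 3). Then P divides a nontrivial polynomial A X^{r+1} + B X^r + C X + D with (A, B, C, D) ∈ (F_p[T])⁴. In particular the unique root of P in F(p) is hyperquadratic. -/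
/-!
The quartic `P = X⁴ + X² - T X - 1/12` has vanishing `I`-invariant (`c₂² + 12 c₀ = 1 - 1 = 0`).
For its four roots `x₀, …, x₃` this says that `a = (x₀ - x₁)(x₂ - x₃)` and
`b = (x₀ - x₂)(x₁ - x₃)` satisfy `a² - ab + b² = 0`, i.e. the cross-ratio `a / b` is a primitive
sixth root of unity. As `r ≡ 1 (mod 6)`, raising to the `r`-th power fixes this cross-ratio, so the
quadruples `(xᵢ)` and `(xᵢʳ)` are related by a Möbius transformation. The proof uses the
equivalent statement that the determinant with rows `(xᵢʳ⁺¹, xᵢʳ, xᵢ, 1)` vanishes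
(`det_crossRatio`, `pow_cross`).

That determinant is the Vandermonde determinant of the roots times the determinant of the matrix of
coefficients of `X^(r+1), X^r, X, 1` modulo `P` (`vandermonde_mul_remainderMatrix`). The roots are
distinct, because a double root would force `27 T² + 8 = 0`, so the coefficient matrix, which has
entries in the domain `F_p[T]` since `P` is monic over it, is singular. A nonzero kernel
vector is `(A, B, C, D)`. The divisibility thus holds already in `F_p[T][X]`, and both the
statement over `F_p(T)` and the one about roots in `F_p((1/T))` follow by mapping coefficients.
-/

noncomputable section
open Polynomial

/-- The quartic `X⁴ + X² - t X - e` over a commutative ring. -/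
def quartic {S : Type} [CommRing S] (t e : S) : S[X] := X ^ 4 + X ^ 2 - C t * X - C e

lemma quartic_monic {S : Type} [CommRing S] (t e : S) : (quartic t e).Monic := by
  unfold quartic; monicity!

lemma quartic_natDegree {S : Type} [CommRing S] [Nontrivial S] (t e : S) :
    (quartic t e).natDegree = 4 := by
  unfold quartic; compute_degree!

lemma quartic_map {S S' : Type} [CommRing S] [CommRing S'] (f : S →+* S') (t e : S) :
    (quartic t e).map f = quartic (f t) (f e) := by
  simp [quartic]

/-! ### Cross-ratios of the roots -/

/-- If `a / b` is a primitive sixth root of unity, it is fixed by every power congruent to `1`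
modulo `6`. -/
lemma pow_cross {L : Type} [Field L] (a b : L) (h : a ^ 2 - a * b + b ^ 2 = 0) (m : ℕ) :
    a * b ^ (6 * m + 1) = b * a ^ (6 * m + 1) := by
  have h3 : a ^ 3 = - b ^ 3 := by linear_combination (a + b) * h
  have h6 : a ^ 6 = b ^ 6 := by
    linear_combination (a ^ 3 - b ^ 3) * h3
  rw [pow_succ, pow_succ, pow_mul, pow_mul, h6]; ring

/-- The determinant expressing that some Möbius transformation sends each `x i` to `y i` is the
cross-multiplied difference of the two cross-ratios. -/
lemma det_crossRatio {L : Type} [Field L] (x y : Fin 4 → L) :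
    (Matrix.of fun i => ![x i * y i, y i, x i, 1]).det =
      (x 0 - x 1) * (x 2 - x 3) * ((y 0 - y 2) * (y 1 - y 3))
        - (x 0 - x 2) * (x 1 - x 3) * ((y 0 - y 1) * (y 2 - y 3)) := by
  simp [Matrix.det_succ_row_zero, Fin.sum_univ_succ, Fin.succAbove]
  ring

/-- The `I`-invariant of the quartic is `1 - 12 e`; when it vanishes the cross-ratio of the roots
is a primitive sixth root of unity. -/
lemma equianharmonic {L : Type} [Field L] {t e a b c d : L} (he : 12 * e = 1)
    (h : quartic t e = (X - C a) * (X - C b) * (X - C c) * (X - C d)) :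
    ((a - b) * (c - d)) ^ 2 - (a - b) * (c - d) * ((a - c) * (b - d))
      + ((a - c) * (b - d)) ^ 2 = 0 := by
  have h' : quartic t e = X ^ 4 - C (a + b + c + d) * X ^ 3
      + C (a * b + a * c + a * d + b * c + b * d + c * d) * X ^ 2
      - C (a * b * c + a * b * d + a * c * d + b * c * d) * X + C (a * b * c * d) := by
    rw [h]; simp only [C_add, C_mul]; ring
  unfold quartic at h'
  have h0 : -e = a * b * c * d := by simpa [coeff_X, coeff_C] using congrArg (coeff · 0) h'
  have h2 : 1 = a * b + a * c + a * d + b * c + b * d + c * d := by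
    simpa [coeff_X, coeff_C, coeff_X_pow, -map_add, -map_mul] using
      congrArg (coeff · 2) h'
  have h3 : 0 = -d + (-c + (-b + -a)) := by
    simpa [coeff_X, coeff_C, coeff_X_pow, -map_add, -map_mul] using
      congrArg (coeff · 3) h'
  linear_combination (-12) * h0
    - (1 + (a * b + a * c + a * d + b * c + b * d + c * d)) * h2
    - 3 * (a * b * c + a * b * d + a * c * d + b * c * d) * h3 - he

/-- A multiple root `x` satisfies `6 x² + 1 = 0`, hence forces `27 t² + 8 = 0`. -/
lemma quartic_no_double {L : Type} [Field L] {t e x : L} (he : 12 * e = 1)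
    (ht : 27 * t ^ 2 + 8 ≠ 0) (h : (quartic t e).IsRoot x)
    (h' : (derivative (quartic t e)).IsRoot x) : False := by
  have h1 : x ^ 4 + x ^ 2 - t * x - e = 0 := by simpa [quartic] using h
  have h2 : 4 * x ^ 3 + 2 * x - t = 0 := by
    have : (3 + 1) * x ^ 3 + (1 + 1) * x - t = 0 := by simpa [quartic] using h'
    linear_combination this
  have h3 : (6 * x ^ 2 + 1) ^ 2 = 0 := by
    linear_combination (-12) * h1 + 12 * x * h2 - he
  have h4 : 6 * x ^ 2 + 1 = 0 := by simpa using h3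
  apply ht
  linear_combination (-27) * (t + (4 * x ^ 3 + 2 * x)) * h2
    + (72 * x ^ 4 + 60 * x ^ 2 + 8) * h4

/-! ### The coefficient matrix modulo the quartic -/

/-- Coefficients of the remainders of `f 0, …, f 3` modulo the quartic; column `k` belongs to
`f k`. -/
def remainderMatrix {S : Type} [CommRing S] (t e : S) (f : Fin 4 → S[X]) :
    Matrix (Fin 4) (Fin 4) S :=
  Matrix.of fun j k => (f k %ₘ quartic t e).coeff j

lemma eval₂_eq_sum_remainder {S L : Type} [CommRing S] [Nontrivial S] [Field L] (φ : S →+* L)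
    (t e : S) (g : S[X]) (x : L) (hx : (quartic t e).eval₂ φ x = 0) :
    g.eval₂ φ x = ∑ j : Fin 4, x ^ (j : ℕ) * φ ((g %ₘ quartic t e).coeff j) := by
  have hlt : (g %ₘ quartic t e).natDegree < 4 := by
    have := natDegree_modByMonic_lt g (quartic_monic t e) (by
      intro h
      have := quartic_natDegree t e
      rw [h] at this
      simp at this)
    rwa [quartic_natDegree] at this
  conv_lhs => rw [← modByMonic_add_div g (quartic t e)]
  rw [eval₂_add, eval₂_mul, hx, zero_mul, add_zero, eval₂_eq_sum_range' φ hlt,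
    Finset.sum_range]
  exact Finset.sum_congr rfl fun j _ => mul_comm _ _

lemma vandermonde_mul_remainderMatrix {S L : Type} [CommRing S] [Nontrivial S] [Field L]
    (φ : S →+* L) (t e : S) (f : Fin 4 → S[X]) (x : Fin 4 → L)
    (hx : ∀ i, (quartic t e).eval₂ φ (x i) = 0) :
    Matrix.vandermonde x * (remainderMatrix t e f).map φ
      = Matrix.of fun i k => (f k).eval₂ φ (x i) := by
  ext i k
  simp only [Matrix.mul_apply, Matrix.vandermonde_apply, Matrix.map_apply, remainderMatrix,
    Matrix.of_apply]
  exact (eval₂_eq_sum_remainder φ t e (f k) (x i) (hx i)).symm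

/-- A kernel vector of the coefficient matrix is a linear relation modulo the quartic. -/
lemma dvd_of_mulVec_eq_zero {S : Type} [CommRing S] [Nontrivial S] (t e : S) (f : Fin 4 → S[X])
    (v : Fin 4 → S) (hv : (remainderMatrix t e f).mulVec v = 0) :
    quartic t e ∣ ∑ k, C (v k) * f k := by
  rw [← modByMonic_eq_zero_iff_dvd (quartic_monic t e)]
  have hmod : (∑ k, C (v k) * f k) %ₘ quartic t e
      = ∑ k, C (v k) * (f k %ₘ quartic t e) := by
    have := map_sum (modByMonicHom (quartic t e)) (fun k => C (v k) * f k) Finset.univ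
    simpa only [modByMonicHom_apply, ← smul_eq_C_mul, smul_modByMonic] using this
  ext n
  by_cases hn : n < 4
  · have := congrFun hv ⟨n, hn⟩
    rw [hmod, finsetSum_coeff]
    simp only [coeff_C_mul, coeff_zero]
    simpa [Matrix.mulVec, dotProduct, remainderMatrix, mul_comm] using this
  · rw [coeff_zero]
    apply coeff_eq_zero_of_degree_lt
    refine lt_of_lt_of_le (degree_modByMonic_lt _ (quartic_monic t e)) ?_
    rw [degree_eq_natDegree (quartic_monic t e).ne_zero, quartic_natDegree]
    exact_mod_cast not_lt.mp hn

/-! ### The relation over an integral domain -/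

/-- Four distinct roots of the quartic in an algebraically closed field, together with the
relation between their differences. -/
lemma exists_roots {L : Type} [Field L] [IsAlgClosed L] (t e : L) (he : 12 * e = 1)
    (ht : 27 * t ^ 2 + 8 ≠ 0) :
    ∃ x : Fin 4 → L, Function.Injective x ∧ (∀ i, (quartic t e).IsRoot (x i)) ∧
      ((x 0 - x 1) * (x 2 - x 3)) ^ 2 - (x 0 - x 1) * (x 2 - x 3) * ((x 0 - x 2) * (x 1 - x 3))
      + ((x 0 - x 2) * (x 1 - x 3)) ^ 2 = 0 := by
  have hs : (quartic t e).Splits := IsAlgClosed.splits _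
  have hne : quartic t e ≠ 0 := (quartic_monic t e).ne_zero
  have hnd : (quartic t e).roots.Nodup := by
    classical
    rw [Multiset.nodup_iff_count_le_one]
    intro y
    rw [count_roots]
    by_contra hlt
    obtain ⟨h1, h2⟩ := (one_lt_rootMultiplicity_iff_isRoot hne).1 (not_le.mp hlt)
    exact quartic_no_double he ht h1 h2
  have hcard : Multiset.card (quartic t e).roots = 4 := by
    rw [← hs.natDegree_eq_card_roots, quartic_natDegree]
  obtain ⟨a, b, c, d, habcd⟩ := Multiset.card_eq_four.1 hcard
  have hprod := hs.eq_prod_roots_of_monic (quartic_monic t e)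
  rw [habcd] at hprod hnd
  have hP : quartic t e = (X - C a) * (X - C b) * (X - C c) * (X - C d) := by
    rw [hprod]; simp [mul_assoc]
  refine ⟨![a, b, c, d], ?_, ?_, ?_⟩
  · simp only [Multiset.insert_eq_cons, Multiset.nodup_cons, Multiset.mem_cons,
      Multiset.mem_singleton, not_or] at hnd
    intro i j
    fin_cases i <;> fin_cases j <;> simp <;> grind
  · intro i
    rw [hP]
    fin_cases i <;> simp
  · simpa using equianharmonic he hP

/-- The heart of the argument: in characteristic `p`, over a domain, with `r = pⁿ ≡ 1 (mod 6)`. -/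
lemma exists_relation {S : Type} [CommRing S] [IsDomain S] (p n m : ℕ) [Fact p.Prime] [CharP S p]
    (hr : p ^ n = 6 * m + 1) (t e : S) (he : 12 * e = 1) (ht : 27 * t ^ 2 + 8 ≠ 0) :
    ∃ A B C' D : S, ¬(A = 0 ∧ B = 0 ∧ C' = 0 ∧ D = 0) ∧
      quartic t e ∣ C A * X ^ (p ^ n + 1) + C B * X ^ (p ^ n) + C C' * X + C D := by
  let L := AlgebraicClosure (FractionRing S)
  let φ : S →+* L := (algebraMap (FractionRing S) L).comp (algebraMap S (FractionRing S))
  have hφ : Function.Injective φ :=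
    (algebraMap (FractionRing S) L).injective.comp (IsFractionRing.injective S (FractionRing S))
  have : CharP L p := charP_of_injective_ringHom hφ p
  obtain ⟨x, hinj, hroot, hx⟩ := exists_roots (φ t) (φ e)
    (by rw [← map_ofNat φ 12, ← map_mul, he, map_one])
    (by
      intro h
      apply ht
      apply hφ
      rw [map_add, map_mul, map_pow, map_ofNat, map_ofNat, map_zero, h])
  have hroot' : ∀ i, (quartic t e).eval₂ φ (x i) = 0 := fun i => by
    rw [← eval_map, quartic_map]
    exact hroot i
  let f : Fin 4 → S[X] := ![X ^ (p ^ n + 1), X ^ (p ^ n), X, 1]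
  have hdet : (remainderMatrix t e f).det = 0 := by
    have hV := congrArg Matrix.det (vandermonde_mul_remainderMatrix φ t e f x hroot')
    have hmat : (Matrix.of fun i k => (f k).eval₂ φ (x i))
        = Matrix.of fun i => ![x i * x i ^ p ^ n, x i ^ p ^ n, x i, 1] := by
      ext i k
      fin_cases k <;> simp [f, pow_succ']
    have hzero : (Matrix.of fun i => ![x i * x i ^ p ^ n, x i ^ p ^ n, x i, 1]).det = 0 := by
      rw [det_crossRatio x (fun i => x i ^ p ^ n)]
      -- The `r`-th power of a difference of roots is the difference of the `r`-th powers.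
      simp only [← sub_pow_expChar_pow, ← mul_pow]
      rw [hr, sub_eq_zero]
      exact pow_cross _ _ hx m
    rw [hmat, hzero, Matrix.det_mul, ← RingHom.mapMatrix_apply, ← RingHom.map_det] at hV
    have hVne : (Matrix.vandermonde x).det ≠ 0 := Matrix.det_vandermonde_ne_zero_iff.2 hinj
    apply hφ
    rw [map_zero]
    exact (mul_eq_zero.1 hV).resolve_left hVne
  obtain ⟨v, hv0, hv⟩ := Matrix.exists_mulVec_eq_zero_iff.2 hdet
  refine ⟨v 0, v 1, v 2, v 3, ?_, ?_⟩
  · rintro ⟨h0, h1, h2, h3⟩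
    apply hv0
    ext i
    fin_cases i <;> assumption
  · simpa [Fin.sum_univ_four, f] using dvd_of_mulVec_eq_zero t e f v hv

/-- The exponent is a power of `p` congruent to `1` modulo `6`. -/
lemma exponent_form (p : ℕ) (hpr : p.Prime) (hp : 5 ≤ p) (r : ℕ)
    (hr : (p % 3 = 1 ∧ r = p) ∨ (p % 3 = 2 ∧ r = p ^ 2)) :
    ∃ n m : ℕ, r = p ^ n ∧ p ^ n = 6 * m + 1 := by
  have hodd : p % 2 = 1 := hpr.eq_two_or_odd.resolve_left (by omega)
  rcases hr with ⟨h3, rfl⟩ | ⟨h3, rfl⟩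
  · exact ⟨1, r / 6, by simp, by rw [pow_one]; omega⟩
  · refine ⟨2, p ^ 2 / 6, rfl, ?_⟩
    have h6 : p % 6 = 5 := by omega
    have : p ^ 2 % 6 = 1 := by rw [Nat.pow_mod, h6]
    omega

/-- Let `p ≥ 5` be prime, `P(X) = X⁴ + X² − TX − 1/12 ∈ F_p(T)[X]`, and
`r = p` if `p ≡ 1 mod 3`, `r = p²` if `p ≡ 2 mod 3`. Then `P` divides a nontrivial
polynomial `A X^{r+1} + B X^r + C X + D` with `A, B, C, D ∈ F_p[T]`; in particular the
unique root of `P` in `F(p)` is hyperquadratic. -/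
theorem stmt2 (p : ℕ) [Fact p.Prime] (hp : 5 ≤ p) (r : ℕ)
    (hr : (p % 3 = 1 ∧ r = p) ∨ (p % 3 = 2 ∧ r = p ^ 2)) :
    ∃ A B C D : Polynomial (ZMod p), ¬(A = 0 ∧ B = 0 ∧ C = 0 ∧ D = 0) ∧
      ((Polynomial.X ^ 4 + Polynomial.X ^ 2
          - Polynomial.C (RatFunc.X : RatFunc (ZMod p)) * Polynomial.X
          - Polynomial.C ((12 : RatFunc (ZMod p))⁻¹)) ∣
        (Polynomial.C (algebraMap (Polynomial (ZMod p)) (RatFunc (ZMod p)) A)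
            * Polynomial.X ^ (r + 1)
          + Polynomial.C (algebraMap (Polynomial (ZMod p)) (RatFunc (ZMod p)) B)
            * Polynomial.X ^ r
          + Polynomial.C (algebraMap (Polynomial (ZMod p)) (RatFunc (ZMod p)) C)
            * Polynomial.X
          + Polynomial.C (algebraMap (Polynomial (ZMod p)) (RatFunc (ZMod p)) D))) ∧
      ∀ u : LaurentSeries (ZMod p),
        u ^ 4 + u ^ 2 - Tval (ZMod p) * u - (12 : LaurentSeries (ZMod p))⁻¹ = 0 →
        pEval A * u ^ (r + 1) + pEval B * u ^ r + pEval C * u + pEval D = 0 := by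
  obtain ⟨n, m, rfl, hm⟩ := exponent_form p Fact.out hp r hr
  have h12 : (12 : ZMod p) ≠ 0 := by
    intro h
    have h' : ((12 : ℕ) : ZMod p) = 0 := by exact_mod_cast h
    rw [ZMod.natCast_eq_zero_iff] at h'
    have hpr : p.Prime := Fact.out
    have h43 : p ∣ 2 ^ 2 * 3 := h'
    rcases (hpr.dvd_mul).1 h43 with h2 | h3
    · have := Nat.le_of_dvd (by norm_num) (hpr.dvd_of_dvd_pow h2)
      omega
    · have := Nat.le_of_dvd (by norm_num) h3
      omega
  have h27 : (27 : ZMod p) ≠ 0 := by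
    intro h
    have h' : ((27 : ℕ) : ZMod p) = 0 := by exact_mod_cast h
    rw [ZMod.natCast_eq_zero_iff] at h'
    have hpr : p.Prime := Fact.out
    have h33 : p ∣ 3 ^ 3 := h'
    have := Nat.le_of_dvd (by norm_num) (hpr.dvd_of_dvd_pow h33)
    omega
  have he : (12 : (ZMod p)[X]) * C ((12 : ZMod p)⁻¹) = 1 := by
    have : (12 : (ZMod p)[X]) = C 12 := (map_ofNat C 12).symm
    rw [this, ← C_mul, mul_inv_cancel₀ h12, C_1]
  have ht : (27 : (ZMod p)[X]) * X ^ 2 + 8 ≠ 0 := by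
    intro h
    apply h27
    have h27C : (27 : (ZMod p)[X]) = C 27 := (map_ofNat C 27).symm
    have h8C : (8 : (ZMod p)[X]) = C 8 := (map_ofNat C 8).symm
    rw [h27C, h8C] at h
    simpa [coeff_C] using congrArg (coeff · 2) h
  obtain ⟨A, B, C', D, hne, hdvd⟩ := exists_relation p n m hm _ _ he ht
  refine ⟨A, B, C', D, hne, ?_, ?_⟩
  · have h := Polynomial.map_dvd (algebraMap (ZMod p)[X] (RatFunc (ZMod p))) hdvd
    rw [quartic_map] at h
    have he' : algebraMap (ZMod p)[X] (RatFunc (ZMod p)) (C (12 : ZMod p)⁻¹)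
        = (12 : RatFunc (ZMod p))⁻¹ := by
      apply eq_inv_of_mul_eq_one_right
      rw [← map_ofNat (algebraMap (ZMod p)[X] (RatFunc (ZMod p))) 12, ← map_mul, he, map_one]
    rw [he', RatFunc.algebraMap_X] at h
    simpa [quartic] using h
  · intro u hu
    have he' : pEvalHom (ZMod p) (C (12 : ZMod p)⁻¹) = (12 : LaurentSeries (ZMod p))⁻¹ := by
      apply eq_inv_of_mul_eq_one_right
      rw [← map_ofNat (pEvalHom (ZMod p)) 12, ← map_mul, he, map_one]
    have hX : pEvalHom (ZMod p) X = Tval (ZMod p) := by simp [pEvalHom]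
    obtain ⟨q, hq⟩ := hdvd
    have h := congrArg (eval₂ (pEvalHom (ZMod p)) u) hq
    have hu' : eval₂ (pEvalHom (ZMod p)) u (quartic X (C (12 : ZMod p)⁻¹)) = 0 := by
      rw [← eval_map, quartic_map, he', hX]
      simpa [quartic] using hu
    rw [eval₂_mul, hu', zero_mul] at h
    simp only [eval₂_add, eval₂_mul, eval₂_C, eval₂_X, eval₂_X_pow] at h
    exact h
end
end

section
/- Let p be an odd prime, l ≥ 1 an integer, k an integer with 1 ≤ k < p/2, a, ε₁, ε₂ ∈ F_p*, and let a₁, …, a_l ∈ F_p[T] be arbitrary polynomials of positive degree. Then there exists a unique irrational α ∈ F(p) whose continued fraction expansion α = [a₁, a₂, …] has first l partial quotients a₁, …, a_l and whose complete quotient α_{l+1} satisfies α^p = ε₁ P_{k,a} α_{l+1} + ε₂ Q_{k,a}. -/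
/-!
Write `A = ε₁ P_{k,a}` and `B = ε₂ Q_{k,a}`; both have degree less than `p`. Solving the equation
for the complete quotient gives `α_{l+1} = (α^p - B) / A` (`solveTail`), so `α` is a solution
exactly when it is a fixed point of `Ψ(x) = [a₁, …, a_l, (x^p - B) / A]` and its continued fraction
does not terminate.

On the ball `|x - a₁| < 1` one has `|x| ≥ |T|`, hence `|x^p| ≥ |T|^p` dominates `B`, and
`(x^p - B) / A` has absolute value greater than `1` (`large_solveTail`); consequently `Ψ` maps the
ball into itself. Since `x ↦ x^p` is additive, `|x - y| ≤ |T|^(-m)` implies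
`|x^p - y^p| ≤ |T|^(-pm)` (`small_solveTail_sub`), and prepending partial quotients does not
increase distances (`small_cfTail_sub`). So `Ψ` is a contraction of the ball, with a fixed point
(`exists_fixed`), and every solution lies in the ball, which gives uniqueness.

The fixed point is irrational (`not_isRat_of_fixed`): if `α = f / g` in lowest terms, then
`α_{l+1}` has a denominator `g'` with `deg g' < deg g`, and clearing denominators in the equation
shows `g^p ∣ g'`, which is absurd. Hence the continued fraction algorithm never stops, and it
returns the prescribed first `l` partial quotients (`cquot_cfTail`).
-/

noncomputable section
open Polynomial

/-! ### Size of a Laurent series in `1/T` -/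

/-- `|x| ≤ |T|^(-m)`: every coefficient of `x` of index below `m` vanishes. -/
def OrdGE {F : Type} [Field F] (m : ℤ) (x : LaurentSeries F) : Prop :=
  ∀ i < m, x.coeff i = 0

/-- `|x| > 1`. Since `HahnSeries.order 0 = 0`, this forces `x ≠ 0`. -/
def Large {F : Type} [Field F] (x : LaurentSeries F) : Prop := x.order < 0

section Size

variable {F : Type} [Field F]

theorem ordGE_iff {m : ℤ} {x : LaurentSeries F} : OrdGE m x ↔ x = 0 ∨ m ≤ x.order := by
  constructor
  · intro h
    by_cases hx : x = 0
    · exact Or.inl hx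
    · refine Or.inr (not_lt.1 fun hlt => ?_)
      exact HahnSeries.coeff_order_eq_zero.not.2 hx (h _ hlt)
  · rintro (rfl | h) i hi
    · simp
    · exact HahnSeries.coeff_eq_zero_of_lt_order (lt_of_lt_of_le hi h)

theorem OrdGE.mono {m n : ℤ} {x : LaurentSeries F} (h : OrdGE m x) (hn : n ≤ m) : OrdGE n x :=
  fun i hi => h i (lt_of_lt_of_le hi hn)

theorem OrdGE.add {m : ℤ} {x y : LaurentSeries F} (hx : OrdGE m x) (hy : OrdGE m y) :
    OrdGE m (x + y) := fun i hi => by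
  rw [HahnSeries.coeff_add, hx i hi, hy i hi, add_zero]

theorem OrdGE.sub {m : ℤ} {x y : LaurentSeries F} (hx : OrdGE m x) (hy : OrdGE m y) :
    OrdGE m (x - y) := fun i hi => by
  rw [HahnSeries.coeff_sub, hx i hi, hy i hi, sub_zero]

theorem OrdGE.mul {m n : ℤ} {x y : LaurentSeries F} (hx : OrdGE m x) (hy : OrdGE n y) :
    OrdGE (m + n) (x * y) := by
  rw [ordGE_iff] at hx hy ⊢
  by_cases hx0 : x = 0
  · simp [hx0]
  by_cases hy0 : y = 0
  · simp [hy0]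
  right
  rw [HahnSeries.order_mul hx0 hy0]
  have := hx.resolve_left hx0
  have := hy.resolve_left hy0
  omega

theorem small_zero_one : OrdGE 0 (1 : LaurentSeries F) := by
  rw [ordGE_iff]; right; simp

theorem OrdGE.pow {m : ℤ} {x : LaurentSeries F} (hx : OrdGE m x) (n : ℕ) :
    OrdGE (n * m) (x ^ n) := by
  induction n with
  | zero => simpa using small_zero_one
  | succ n ih =>
    rw [pow_succ]
    refine (ih.mul hx).mono (le_of_eq ?_)
    push_cast; ring

theorem eq_zero_of_small {x : LaurentSeries F} (h : ∀ n : ℕ, OrdGE n x) : x = 0 := by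
  ext i
  exact h (i.toNat + 1) i (by push_cast; omega)

theorem Large.ne_zero {x : LaurentSeries F} (h : Large x) : x ≠ 0 := by
  rintro rfl
  simp [Large] at h

theorem order_inv_eq {x : LaurentSeries F} (hx : x ≠ 0) : x⁻¹.order = -x.order := by
  have h := HahnSeries.order_mul hx (inv_ne_zero hx)
  rw [mul_inv_cancel₀ hx, HahnSeries.order_one] at h
  omega

theorem Large.inv_small {x : LaurentSeries F} (h : Large x) : OrdGE 1 x⁻¹ := by
  rw [ordGE_iff, order_inv_eq h.ne_zero]
  right
  unfold Large at h
  omega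

theorem Large.add_small {x y : LaurentSeries F} (hx : Large x) (hy : OrdGE 0 y) :
    Large (x + y) := by
  have h : (x + y).coeff x.order ≠ 0 := by
    rw [HahnSeries.coeff_add, hy _ hx, add_zero]
    exact HahnSeries.coeff_order_eq_zero.not.2 hx.ne_zero
  exact lt_of_le_of_lt (HahnSeries.order_le_of_coeff_ne_zero h) hx

theorem small_zero_of_not_large {x : LaurentSeries F} (h : ¬ Large x) : OrdGE 0 x := by
  rw [ordGE_iff]
  exact Or.inr (not_lt.1 h)

theorem large_inv {x : LaurentSeries F} (h : OrdGE 1 x) (hx : x ≠ 0) : Large x⁻¹ := by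
  have := (ordGE_iff.1 h).resolve_left hx
  unfold Large
  rw [order_inv_eq hx]
  omega

/-- Inversion is distance-decreasing on `{|x| > 1}`. -/
theorem small_inv_sub_inv {m : ℤ} {x y : LaurentSeries F} (hx : Large x) (hy : Large y)
    (h : OrdGE m (x - y)) : OrdGE m (x⁻¹ - y⁻¹) := by
  have e : x⁻¹ - y⁻¹ = (0 - (x - y)) * (x⁻¹ * y⁻¹) := by
    have := hx.ne_zero
    have := hy.ne_zero
    field_simp
    ring
  have h0 : OrdGE m (0 : LaurentSeries F) := fun _ _ => rfl
  rw [e]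
  exact ((h0.sub h).mul (hx.inv_small.mul hy.inv_small)).mono (by omega)

/-! ### Polynomials inside the Laurent series -/

theorem pEval_eq_hom (f : Polynomial F) : pEval f = pEvalHom F f := rfl

theorem Tval_pow (n : ℕ) : Tval F ^ n = HahnSeries.single (-(n : ℤ)) 1 := by
  have h : Tval F = HahnSeries.single (-1 : ℤ) 1 := by
    unfold Tval
    simp
  rw [h, HahnSeries.single_pow]
  simp

theorem pEval_coeff (f : Polynomial F) (i : ℤ) :
    (pEval f).coeff i = if i ≤ 0 then f.coeff (-i).toNat else 0 := by
  induction f using Polynomial.induction_on' with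
  | add f g hf hg =>
    rw [pEval_eq_hom] at *
    rw [map_add, HahnSeries.coeff_add, hf, hg, Polynomial.coeff_add]
    split_ifs <;> simp
  | monomial n c =>
    have h : pEval (monomial n c) = HahnSeries.single (-(n : ℤ)) c := by
      rw [pEval, Polynomial.eval₂_monomial, Tval_pow, HahnSeries.C_apply,
        HahnSeries.single_mul_single]
      simp
    rw [h, HahnSeries.coeff_single, Polynomial.coeff_monomial]
    split_ifs <;> first | rfl | omega

theorem pEval_C (c : F) : pEval (Polynomial.C c) = HahnSeries.C c := by
  simp [pEval]

theorem pEval_small (f : Polynomial F) : OrdGE (-(f.natDegree : ℤ)) (pEval f) := by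
  intro i hi
  rw [pEval_coeff, if_pos (by omega)]
  exact Polynomial.coeff_eq_zero_of_natDegree_lt (by omega)

theorem pEval_order_le {f : Polynomial F} (hf : f ≠ 0) :
    (pEval f).order ≤ -(f.natDegree : ℤ) := by
  apply HahnSeries.order_le_of_coeff_ne_zero
  rw [pEval_coeff, if_pos (by omega)]
  simpa using hf

theorem pEval_order {f : Polynomial F} (hf : f ≠ 0) :
    (pEval f).order = -(f.natDegree : ℤ) := by
  refine le_antisymm (pEval_order_le hf) ?_
  refine (ordGE_iff.1 (pEval_small f)).resolve_left fun h => ?_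
  have h1 : (pEval f).coeff (-(f.natDegree : ℤ)) = 0 := by rw [h]; rfl
  rw [pEval_coeff, if_pos (by omega)] at h1
  simp at h1
  exact hf h1

theorem pEval_inj {f g : Polynomial F} (h : pEval f = pEval g) : f = g := by
  ext n
  have := congrArg (fun x : LaurentSeries F => x.coeff (-(n : ℤ))) h
  simpa [pEval_coeff] using this

theorem pEval_ne_zero {f : Polynomial F} (hf : f ≠ 0) : pEval f ≠ 0 := by
  intro h
  exact hf (pEval_inj (h.trans (by simp [pEval])))

theorem large_pEval {f : Polynomial F} (hf : 0 < f.degree) : Large (pEval f) := by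
  have h := pEval_order_le (Polynomial.ne_zero_of_degree_gt hf)
  have := Polynomial.natDegree_pos_iff_degree_pos.2 hf
  unfold Large
  omega

theorem intPart_coeff (x : LaurentSeries F) (n : ℕ) :
    (intPart x).coeff n = x.coeff (-(n : ℤ)) := by
  unfold intPart
  rw [Polynomial.finsetSum_coeff]
  simp only [Polynomial.coeff_C_mul_X_pow]
  rw [Finset.sum_ite_eq]
  split_ifs with h
  · rfl
  · symm
    apply HahnSeries.coeff_eq_zero_of_lt_order
    simp only [Finset.mem_range] at h
    omega

theorem sub_intPart_small (x : LaurentSeries F) : OrdGE 1 (x - pEval (intPart x)) := by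
  intro i hi
  rw [HahnSeries.coeff_sub, pEval_coeff, if_pos (by omega), intPart_coeff,
    Int.toNat_of_nonneg (by omega), neg_neg, sub_self]

theorem degree_intPart_pos {x : LaurentSeries F} (hx : Large x) : 0 < (intPart x).degree := by
  unfold Large at hx
  rw [← Polynomial.natDegree_pos_iff_degree_pos]
  have h : (intPart x).coeff (-x.order).toNat ≠ 0 := by
    rw [intPart_coeff, Int.toNat_of_nonneg (by omega), neg_neg]
    exact HahnSeries.coeff_order_eq_zero.not.2 (Large.ne_zero hx)
  have := Polynomial.le_natDegree_of_ne_zero h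
  omega

theorem intPart_add_small (f : Polynomial F) {y : LaurentSeries F} (hy : OrdGE 1 y) :
    intPart (pEval f + y) = f := by
  ext n
  rw [intPart_coeff, HahnSeries.coeff_add, hy _ (by omega), pEval_coeff, if_pos (by omega)]
  simp

/-! ### Rational elements -/

/-- `x` lies in the image of `F(T)`. -/
def IsRat (x : LaurentSeries F) : Prop :=
  ∃ f g : Polynomial F, g ≠ 0 ∧ x * pEval g = pEval f

theorem isRat_pEval (f : Polynomial F) : IsRat (pEval f) :=
  ⟨f, 1, one_ne_zero, by simp [pEval]⟩

theorem IsRat.step {x : LaurentSeries F} (hx : IsRat x) (h0 : x ≠ 0) (c : Polynomial F) :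
    IsRat (pEval c + x⁻¹) := by
  obtain ⟨f, g, hg, h⟩ := hx
  have hf : pEval f ≠ 0 := by
    rw [← h]
    exact mul_ne_zero h0 (pEval_ne_zero hg)
  refine ⟨c * f + g, f, ?_, ?_⟩
  · rintro rfl
    simp [pEval] at hf
  · have e : x⁻¹ * pEval f = pEval g := by
      rw [← h, inv_mul_cancel_left₀ h0]
    rw [add_mul, e]
    simp [pEval_eq_hom]

/-! ### The regular continued fraction algorithm -/

/-- Complete quotients of `x`; index `0` is the first one, `x` itself. -/
def cquot (x : LaurentSeries F) : ℕ → LaurentSeries F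
  | 0 => x
  | n + 1 => (cquot x n - pEval (intPart (cquot x n)))⁻¹

theorem cquot_eq (x : LaurentSeries F) (n : ℕ) :
    cquot x n = pEval (intPart (cquot x n)) + (cquot x (n + 1))⁻¹ := by
  simp [cquot]

/-- The complete quotients of an irrational `x` never run out. -/
theorem cquot_spec {x : LaurentSeries F} (hx : Large x) (hr : ¬ IsRat x) (n : ℕ) :
    Large (cquot x n) ∧ ¬ IsRat (cquot x n) := by
  induction n with
  | zero => exact ⟨hx, hr⟩
  | succ n ih =>
    have hne : cquot x n - pEval (intPart (cquot x n)) ≠ 0 := by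
      intro h
      refine ih.2 ?_
      rw [sub_eq_zero.1 h]
      exact isRat_pEval _
    have hl : Large (cquot x (n + 1)) := large_inv (sub_intPart_small _) hne
    refine ⟨hl, fun h => ih.2 ?_⟩
    rw [cquot_eq x n]
    exact h.step hl.ne_zero _

theorem isCFOf_cquot {x : LaurentSeries F} (hx : Large x) (hr : ¬ IsRat x) :
    IsCFOf x (fun n => intPart (cquot x (n - 1))) (fun n => cquot x (n - 1)) := by
  refine ⟨rfl, fun n hn => ?_⟩
  have h := (cquot_spec hx hr (n - 1)).1
  refine ⟨degree_intPart_pos h, ?_, ?_⟩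
  · exact neg_pos.2 h
  · obtain ⟨m, rfl⟩ := Nat.exists_eq_add_of_le' hn
    exact cquot_eq x m

/-! ### Continued fractions with prescribed first partial quotients -/

/-- `[c 0, …, c (n-1), y]`. -/
def cfTail (c : ℕ → Polynomial F) : ℕ → LaurentSeries F → LaurentSeries F
  | 0, y => y
  | n + 1, y => pEval (c 0) + (cfTail (fun j => c (j + 1)) n y)⁻¹

theorem large_cfTail {n : ℕ} {c : ℕ → Polynomial F} (hc : ∀ j < n, 0 < (c j).degree)
    {y : LaurentSeries F} (hy : Large y) : Large (cfTail c n y) := by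
  induction n generalizing c with
  | zero => exact hy
  | succ n ih =>
    have h := ih (c := fun j => c (j + 1)) fun j hj => hc _ (by omega)
    exact (large_pEval (hc 0 (by omega))).add_small (h.inv_small.mono (by omega))

theorem small_cfTail_sub {n : ℕ} {c : ℕ → Polynomial F} (hc : ∀ j < n, 0 < (c j).degree)
    {y z : LaurentSeries F} (hy : Large y) (hz : Large z) {m : ℤ} (h : OrdGE m (y - z)) :
    OrdGE m (cfTail c n y - cfTail c n z) := by
  induction n generalizing c with
  | zero => exact h
  | succ n ih =>
    have hc' : ∀ j < n, 0 < (c (j + 1)).degree := fun j hj => hc _ (by omega)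
    have := small_inv_sub_inv (large_cfTail hc' hy) (large_cfTail hc' hz) (ih hc')
    simpa [cfTail] using this

theorem small_cfTail_head {n : ℕ} {c : ℕ → Polynomial F} (hc : ∀ j < n + 1, 0 < (c j).degree)
    {y : LaurentSeries F} (hy : Large y) : OrdGE 1 (cfTail c (n + 1) y - pEval (c 0)) := by
  have h := large_cfTail (n := n) (c := fun j => c (j + 1)) (fun j hj => hc _ (by omega)) hy
  simpa [cfTail] using h.inv_small

theorem cquot_succ' (x : LaurentSeries F) (n : ℕ) :
    cquot x (n + 1) = cquot (cquot x 1) n := by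
  induction n with
  | zero => rfl
  | succ n ih => rw [cquot, ih]; rfl

theorem cquot_one_cfTail {n : ℕ} {c : ℕ → Polynomial F} (hc : ∀ j < n + 1, 0 < (c j).degree)
    {y : LaurentSeries F} (hy : Large y) :
    intPart (cfTail c (n + 1) y) = c 0 ∧
      cquot (cfTail c (n + 1) y) 1 = cfTail (fun j => c (j + 1)) n y := by
  have h := large_cfTail (n := n) (c := fun j => c (j + 1)) (fun j hj => hc _ (by omega)) hy
  have h1 : intPart (cfTail c (n + 1) y) = c 0 := intPart_add_small _ h.inv_small
  refine ⟨h1, ?_⟩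
  simp only [cquot]
  rw [h1]
  simp [cfTail]

/-- The continued fraction algorithm recovers the data of `[c 0, …, c (n-1), y]`. -/
theorem cquot_cfTail {n : ℕ} {c : ℕ → Polynomial F} (hc : ∀ j < n, 0 < (c j).degree)
    {y : LaurentSeries F} (hy : Large y) :
    cquot (cfTail c n y) n = y ∧ ∀ j < n, intPart (cquot (cfTail c n y) j) = c j := by
  induction n generalizing c with
  | zero => exact ⟨rfl, fun j hj => absurd hj (by omega)⟩
  | succ n ih =>
    obtain ⟨h0, h1⟩ := cquot_one_cfTail hc hy
    obtain ⟨i0, i1⟩ := ih (c := fun j => c (j + 1)) fun j hj => hc _ (by omega)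
    refine ⟨by rw [cquot_succ', h1, i0], fun j hj => ?_⟩
    cases j with
    | zero => exact h0
    | succ j => rw [cquot_succ', h1]; exact i1 j (by omega)

/-- If `[c 0, …, c (n-1), y]` is the fraction `f / g`, then `y` is a fraction whose denominator
has degree at least `n` less than that of `g` (one Euclidean division per partial quotient). -/
theorem cfTail_rat {n : ℕ} {c : ℕ → Polynomial F} (hc : ∀ j < n, 0 < (c j).degree)
    {y : LaurentSeries F} (hy : Large y) {f g : Polynomial F} (hg : g ≠ 0)
    (h : cfTail c n y * pEval g = pEval f) :
    ∃ f' g' : Polynomial F, g' ≠ 0 ∧ y * pEval g' = pEval f' ∧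
      g'.natDegree + n ≤ g.natDegree := by
  induction n generalizing c f g with
  | zero => exact ⟨f, g, hg, h, le_rfl⟩
  | succ n ih =>
    set z := cfTail (fun j => c (j + 1)) n y with hz
    have hc' : ∀ j < n, 0 < (c (j + 1)).degree := fun j hj => hc _ (by omega)
    have hzl : Large z := large_cfTail hc' hy
    have h2 : z * pEval (f - c 0 * g) = pEval g := by
      have h3 : (pEval (c 0) + z⁻¹) * pEval g = pEval f := h
      have h4 : pEval (f - c 0 * g) = z⁻¹ * pEval g := by
        rw [pEval_eq_hom, map_sub, map_mul]
        simp only [← pEval_eq_hom]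
        rw [← h3]
        ring
      rw [h4, mul_inv_cancel_left₀ hzl.ne_zero]
    have hne : f - c 0 * g ≠ 0 := by
      intro h0
      rw [h0] at h2
      exact pEval_ne_zero hg (by rw [← h2]; simp [pEval])
    obtain ⟨f', g', hg', hy', hd⟩ := ih hc' hne h2
    refine ⟨f', g', hg', hy', ?_⟩
    have ho := HahnSeries.order_mul hzl.ne_zero (pEval_ne_zero hne)
    rw [h2, pEval_order hg, pEval_order hne] at ho
    unfold Large at hzl
    omega

end Size

/-! ### The fixed point equation -/

section Fixed

variable {F : Type} [Field F] (p : ℕ) (A B : Polynomial F)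

/-- The value of `α_{l+1}` dictated by `α^p = A α_{l+1} + B`. -/
def solveTail (x : LaurentSeries F) : LaurentSeries F := (x ^ p - pEval B) * (pEval A)⁻¹

variable {p A B}

theorem large_solveTail (hA0 : A ≠ 0) (hA : A.natDegree < p) (hB : B.natDegree < p)
    {x : LaurentSeries F} (hx : Large x) : Large (solveTail p A B x) := by
  by_contra hn
  have hA' : OrdGE (1 - p : ℤ) (pEval A) := (pEval_small A).mono (by omega)
  have hB' : OrdGE (1 - p : ℤ) (pEval B) := (pEval_small B).mono (by omega)
  have e : x ^ p = solveTail p A B x * pEval A + pEval B := by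
    rw [solveTail, inv_mul_cancel_right₀ (pEval_ne_zero hA0)]
    ring
  have h : OrdGE (1 - p : ℤ) (x ^ p) := by
    rw [e]
    exact (((small_zero_of_not_large hn).mul hA').mono (by omega)).add hB'
  have h1 := (ordGE_iff.1 h).resolve_left (pow_ne_zero _ hx.ne_zero)
  rw [HahnSeries.order_pow] at h1
  have h2 : x.order ≤ -1 := by unfold Large at hx; omega
  rw [nsmul_eq_mul] at h1
  nlinarith

theorem small_solveTail_sub [Fact p.Prime] [CharP F p] (hA0 : A ≠ 0)
    {x y : LaurentSeries F} {m : ℤ} (h : OrdGE m (x - y)) :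
    OrdGE (p * m) (solveTail p A B x - solveTail p A B y) := by
  have : CharP (LaurentSeries F) p :=
    charP_of_injective_ringHom (HahnSeries.C_injective (Γ := ℤ) (R := F)) p
  have e : solveTail p A B x - solveTail p A B y = (x - y) ^ p * (pEval A)⁻¹ := by
    rw [sub_pow_char]
    unfold solveTail
    ring
  have hA : OrdGE 0 (pEval A)⁻¹ := by
    rw [ordGE_iff, order_inv_eq (pEval_ne_zero hA0), pEval_order hA0]
    right; omega
  rw [e]
  exact ((h.pow p).mul hA).mono (by omega)

/-- A solution is irrational: if `α = f / g` in lowest terms, the equation makes `g ^ p` divide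
a denominator of `α_{l+1}`, whose degree is less than that of `g`. -/
theorem not_isRat_of_fixed (hp : 1 ≤ p) {l : ℕ} (hl : 1 ≤ l) {c : ℕ → Polynomial F}
    (hc : ∀ j < l, 0 < (c j).degree) {y : LaurentSeries F} (hy : Large y)
    (h : cfTail c l y ^ p = pEval A * y + pEval B) : ¬ IsRat (cfTail c l y) := by
  rintro ⟨f₀, g₀, hg₀, hfg₀⟩
  obtain ⟨f, g, d, hrel, rfl, rfl⟩ :=
    UniqueFactorizationMonoid.exists_reduced_factors' f₀ g₀ hg₀
  have hg : g ≠ 0 := right_ne_zero_of_mul hg₀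
  have hd : pEval d ≠ 0 := pEval_ne_zero (left_ne_zero_of_mul hg₀)
  have hfg : cfTail c l y * pEval g = pEval f := by
    apply mul_left_cancel₀ hd
    simp only [pEval_eq_hom, map_mul] at hfg₀ ⊢
    rw [← hfg₀]
    ring
  obtain ⟨f', g', hg', hy', hdeg⟩ := cfTail_rat hc hy hg hfg
  have key : f ^ p * g' = g ^ p * (A * f' + B * g') := by
    apply pEval_inj
    have : pEval f ^ p * pEval g' = pEval g ^ p * (pEval A * pEval f' + pEval B * pEval g') := by
      rw [← hfg, ← hy', mul_pow, h]
      ring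
    simpa [pEval_eq_hom] using this
  have hdvd : g ^ p ∣ g' := by
    refine IsCoprime.dvd_of_dvd_mul_left (y := f ^ p) ?_ ⟨_, key⟩
    exact hrel.isCoprime.symm.pow
  have := Polynomial.natDegree_le_of_dvd hdvd hg'
  rw [Polynomial.natDegree_pow] at this
  nlinarith

/-- Successive approximation: a self-map of the ball `|x - x₀| < 1` which divides distances by at
least `|T|` has a fixed point, because `F((1/T))` is complete. -/
theorem exists_fixed_s3 (Ψ : LaurentSeries F → LaurentSeries F) (x₀ : LaurentSeries F)
    (hmaps : ∀ x, OrdGE 1 (x - x₀) → OrdGE 1 (Ψ x - x₀))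
    (hcontr : ∀ x y, OrdGE 1 (x - x₀) → OrdGE 1 (y - x₀) → ∀ m : ℕ, 1 ≤ m →
      OrdGE m (x - y) → OrdGE (m + 1 : ℕ) (Ψ x - Ψ y)) :
    ∃ x, OrdGE 1 (x - x₀) ∧ Ψ x = x := by
  set u : ℕ → LaurentSeries F := fun n => Ψ^[n] x₀ with hu
  have hus : ∀ n, u (n + 1) = Ψ (u n) := fun n => Function.iterate_succ_apply' Ψ n x₀
  have hball : ∀ n, OrdGE 1 (u n - x₀) := by
    intro n
    induction n with
    | zero => intro i _; simp [hu]
    | succ n ih => rw [hus]; exact hmaps _ ih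
  have hstep : ∀ n : ℕ, OrdGE (n + 1 : ℕ) (u (n + 1) - u n) := by
    intro n
    induction n with
    | zero => exact hball 1
    | succ n ih =>
      have := hcontr _ _ (hball (n + 1)) (hball n) (n + 1) (by omega) ih
      rwa [← hus, ← hus] at this
  have hcauchy : ∀ n d : ℕ, OrdGE (n + 1 : ℕ) (u (n + d) - u n) := by
    intro n d
    induction d with
    | zero => intro i _; simp
    | succ d ih =>
      have := ((hstep (n + d)).mono (n := (n + 1 : ℕ)) (by push_cast; omega)).add ih
      simpa [add_assoc] using this
  have hbdd : ∀ i < min x₀.order 0, (u i.toNat).coeff i = 0 := by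
    intro i hi
    have hi0 : i.toNat = 0 := by omega
    rw [hi0]
    exact HahnSeries.coeff_eq_zero_of_lt_order (x := x₀) (by omega)
  -- The coefficients of index at most `n` are constant along `u` from the `n`-th term on.
  let x : LaurentSeries F := HahnSeries.ofSuppBddBelow (fun i : ℤ => (u i.toNat).coeff i)
    ⟨min x₀.order 0, fun i hi => not_lt.1 fun hlt => hi (hbdd i hlt)⟩
  have hx : ∀ i, x.coeff i = (u i.toNat).coeff i := fun i => rfl
  have hlim : ∀ n : ℕ, OrdGE (n + 1 : ℕ) (x - u n) := by
    intro n i hi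
    obtain ⟨d, hd⟩ : ∃ d, n = i.toNat + d := ⟨n - i.toNat, by omega⟩
    have := hcauchy i.toNat d i (by push_cast; omega)
    rw [← hd, HahnSeries.coeff_sub] at this
    rw [HahnSeries.coeff_sub, hx, ← neg_sub, this, neg_zero]
  have hx1 : OrdGE 1 (x - x₀) := by simpa [hu] using hlim 0
  refine ⟨x, hx1, sub_eq_zero.1 (eq_zero_of_small fun n => ?_)⟩
  have h1 := hcontr x (u n) hx1 (hball n) (n + 1) (by omega) (hlim n)
  have h2 := hlim (n + 1)
  rw [← hus] at h1
  have := h1.sub h2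
  rw [sub_sub_sub_cancel_right] at this
  exact this.mono (by push_cast; omega)

end Fixed

/-! ### Degrees of `P_{k,a}`, `Q_{k,a}` and the prescribed initial segment -/

theorem natDegree_polyInt_le {F : Type} [Field F] (f : Polynomial F) :
    (polyInt f).natDegree ≤ f.natDegree + 1 := by
  unfold polyInt
  refine Polynomial.natDegree_sum_le_of_forall_le _ _ fun i hi => ?_
  refine (Polynomial.natDegree_C_mul_X_pow_le _ _).trans ?_
  simp only [Finset.mem_range] at hi
  omega

theorem natDegree_Pka_le {F : Type} [Field F] (k : ℕ) (a : F) :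
    (Pka k a).natDegree ≤ 2 * k := by
  unfold Pka
  rw [Polynomial.natDegree_pow, Polynomial.natDegree_X_pow_add_C, mul_comm]

theorem Pka_ne_zero {F : Type} [Field F] (k : ℕ) (a : F) : Pka k a ≠ 0 :=
  pow_ne_zero _ (Polynomial.X_pow_add_C_ne_zero (by omega) a)

/-- Cutting an expansion after `l` partial quotients. The partial quotients are indexed from `1` in
`IsCFOf` and from `0` in `cfTail`. -/
theorem IsCFOf.eq_cfTail {F : Type} [Field F] {α : LaurentSeries F} {aa : ℕ → Polynomial F}
    {β : ℕ → LaurentSeries F} (h : IsCFOf α aa β) (l : ℕ) :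
    α = cfTail (fun j => aa (j + 1)) l (β (l + 1)) := by
  have key : ∀ l n, β (n + 1) = cfTail (fun j => aa (n + j + 1)) l (β (n + l + 1)) := by
    intro l
    induction l with
    | zero => intro n; rfl
    | succ l ih =>
      intro n
      rw [(h.2 (n + 1) (by omega)).2.2, ih (n + 1), cfTail]
      simp only [add_assoc, add_comm, add_left_comm]
  have := key l 0
  simp only [zero_add] at this
  rw [← h.1]
  exact this

theorem cfTail_congr {F : Type} [Field F] {n : ℕ} {c d : ℕ → Polynomial F}
    (h : ∀ j < n, c j = d j) (y : LaurentSeries F) : cfTail c n y = cfTail d n y := by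
  induction n generalizing c d with
  | zero => rfl
  | succ n ih =>
    simp only [cfTail]
    rw [h 0 (by omega), ih fun j hj => h (j + 1) (by omega)]

/-- Let `p` be an odd prime, `l ≥ 1`, `1 ≤ k < p/2`, `a, ε₁, ε₂ ∈ F_p*`,
and `a₁, …, a_l ∈ F_p[T]` of positive degree. Then there is a unique (irrational)
`α ∈ F(p)` whose continued fraction has first `l` partial quotients `a₁, …, a_l` and whose
complete quotient `α_{l+1}` satisfies `α^p = ε₁ P_{k,a} α_{l+1} + ε₂ Q_{k,a}`. -/
theorem stmt3 (p : ℕ) [Fact p.Prime] (hodd : Odd p) (l k : ℕ) (hl : 1 ≤ l)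
    (hk : 1 ≤ k) (hk2 : 2 * k < p) (a ε₁ ε₂ : ZMod p)
    (ha : a ≠ 0) (hε₁ : ε₁ ≠ 0) (hε₂ : ε₂ ≠ 0)
    (a₀ : ℕ → Polynomial (ZMod p)) (ha₀ : ∀ j, 1 ≤ j → j ≤ l → 0 < (a₀ j).degree) :
    ∃! α : LaurentSeries (ZMod p),
      ∃ (aa : ℕ → Polynomial (ZMod p)) (β : ℕ → LaurentSeries (ZMod p)),
        IsCFOf α aa β ∧ (∀ j, 1 ≤ j → j ≤ l → aa j = a₀ j) ∧
        α ^ p = HahnSeries.C ε₁ * pEval (Pka k a) * β (l + 1)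
              + HahnSeries.C ε₂ * pEval (Qka k a) := by
  set A : Polynomial (ZMod p) := Polynomial.C ε₁ * Pka k a with hAdef
  set B : Polynomial (ZMod p) := Polynomial.C ε₂ * Qka k a with hBdef
  have hAe : HahnSeries.C ε₁ * pEval (Pka k a) = pEval A := by
    rw [← pEval_C, hAdef]
    simp only [pEval_eq_hom, map_mul]
  have hBe : HahnSeries.C ε₂ * pEval (Qka k a) = pEval B := by
    rw [← pEval_C, hBdef]
    simp only [pEval_eq_hom, map_mul]
  rw [hAe, hBe]
  have hA0 : A ≠ 0 := mul_ne_zero (Polynomial.C_ne_zero.2 hε₁) (Pka_ne_zero k a)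
  have hA : A.natDegree < p :=
    lt_of_le_of_lt ((Polynomial.natDegree_C_mul_le _ _).trans (natDegree_Pka_le k a)) hk2
  have hB : B.natDegree < p := by
    have h1 : B.natDegree ≤ _ := Polynomial.natDegree_C_mul_le ε₂ (Qka k a)
    have h2 : (Qka k a).natDegree ≤ _ := natDegree_polyInt_le (Pka (k - 1) a)
    have h3 := natDegree_Pka_le (k - 1) a
    omega
  obtain ⟨n, rfl⟩ := Nat.exists_eq_add_of_le' hl
  set c : ℕ → Polynomial (ZMod p) := fun j => a₀ (j + 1) with hcdef
  have hc : ∀ j < n + 1, 0 < (c j).degree := fun j hj => ha₀ _ (by omega) (by omega)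
  have hlarge : ∀ x, OrdGE 1 (x - pEval (c 0)) → Large x := fun x hx => by
    have := (large_pEval (hc 0 (by omega))).add_small (hx.mono (by omega))
    rwa [add_sub_cancel] at this
  have hsol : ∀ x, OrdGE 1 (x - pEval (c 0)) → Large (solveTail p A B x) := fun x hx =>
    large_solveTail hA0 hA hB (hlarge x hx)
  set Ψ : LaurentSeries (ZMod p) → LaurentSeries (ZMod p) :=
    fun x => cfTail c (n + 1) (solveTail p A B x) with hΨ
  have hmaps : ∀ x, OrdGE 1 (x - pEval (c 0)) → OrdGE 1 (Ψ x - pEval (c 0)) := fun x hx =>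
    small_cfTail_head hc (hsol x hx)
  have hp2 : 2 ≤ p := (Fact.out : p.Prime).two_le
  have hcontr : ∀ x y, OrdGE 1 (x - pEval (c 0)) → OrdGE 1 (y - pEval (c 0)) →
      ∀ m : ℕ, 1 ≤ m → OrdGE m (x - y) → OrdGE (m + 1 : ℕ) (Ψ x - Ψ y) := by
    intro x y hx hy m hm h
    have h1 := small_solveTail_sub (p := p) (A := A) (B := B) hA0 h
    refine (small_cfTail_sub hc (hsol x hx) (hsol y hy) h1).mono ?_
    have : m + 1 ≤ p * m := by nlinarith
    exact_mod_cast this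
  obtain ⟨x, hx, hfix⟩ := exists_fixed_s3 Ψ (pEval (c 0)) hmaps hcontr
  have hxl := hlarge x hx
  have hyl := hsol x hx
  have heq : x ^ p = pEval A * solveTail p A B x + pEval B := by
    rw [solveTail, mul_comm, inv_mul_cancel_right₀ (pEval_ne_zero hA0)]
    ring
  have hirr : ¬ IsRat x := by
    rw [← hfix]
    refine not_isRat_of_fixed (p := p) (A := A) (B := B) (by omega) hl hc hyl ?_
    change Ψ x ^ p = _
    rw [hfix, heq]
  obtain ⟨hq, hint⟩ := cquot_cfTail hc hyl
  change cquot (Ψ x) (n + 1) = _ at hq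
  change ∀ j < n + 1, intPart (cquot (Ψ x) j) = c j at hint
  rw [hfix] at hq hint
  refine ⟨x, ⟨_, _, isCFOf_cquot hxl hirr, fun j hj1 hj2 => ?_, ?_⟩, ?_⟩
  · obtain ⟨i, rfl⟩ := Nat.exists_eq_add_of_le' hj1
    exact hint i (by omega)
  · change x ^ p = pEval A * cquot x (n + 1) + pEval B
    rw [hq, heq]
  · rintro z ⟨aa, β, hcf, haa, hz⟩
    have hβ : Large (β (n + 1 + 1)) := by
      have := (hcf.2 (n + 1 + 1) (by omega)).2.1
      unfold adeg at this
      unfold Large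
      omega
    have hβe : β (n + 1 + 1) = solveTail p A B z := by
      rw [solveTail, hz, add_sub_cancel_right, mul_comm, inv_mul_cancel_left₀ (pEval_ne_zero hA0)]
    have hze : z = Ψ z := by
      have h1 := hcf.eq_cfTail (n + 1)
      rw [cfTail_congr (d := c) (fun j hj => haa _ (by omega) (by omega)), hβe] at h1
      exact h1
    have hzb : OrdGE 1 (z - pEval (c 0)) := by
      rw [hze]
      refine small_cfTail_head hc ?_
      rw [← hβe]
      exact hβ
    refine sub_eq_zero.1 (eq_zero_of_small fun m => ?_)
    have hall : ∀ m : ℕ, OrdGE (m + 1 : ℕ) (z - x) := by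
      intro m
      induction m with
      | zero => simpa using hzb.sub hx
      | succ m ih =>
        have := hcontr z x hzb hx (m + 1) (by omega) ih
        rwa [← hze, hfix] at this
    exact (hall m).mono (by push_cast; omega)
end
end

section
/- Let α ∈ F(7) be the unique power series with |α| > 1 satisfying −α⁴/12 − Tα³ + α² + 1 = 0 (the inverse of the unique root in F(7) of x⁴ + x² − Tx − 1/12 = 0). Then the first three partial quotients of the continued fraction expansion of α are (a₁, a₂, a₃) = (2T, 6T, 6T), and the fourth complete quotient α₄ satisfies α⁷ = 3(T² − 1)² α₄ + 5(5T³ + 6T). -/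
/-!
Write `x = 1/α`, so `|x| < 1`. Since `1/12 = 3` in characteristic 7, the quartic equation says
`T = 4α + x + x³` (`solve_T`), so `T` and every complete quotient of `α` are rational functions
of `x`. A series splits uniquely as a polynomial in `T` plus an element of absolute value less
than one (`step_unique`, because a polynomial of absolute value less than one vanishes), so the
partial quotients are recognised by exhibiting such splittings:

* `α = 2T + (5x + 5x³)`;
* `α₂ = 3 / (x (1 + x²)) = 6T + (x + x³ - 3x / (1 + x²))`;
* `α₃ = (1 + x²) / (x (-2 + 2x² + x⁴)) = 6T + (x + x³ - (5x + 3x³) / (-2 + 2x² + x⁴))`.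

The remainders are small because `1 + x²` and `-2 + 2x² + x⁴` have absolute value one. The last
one gives `α₄ = (-2 + 2x² + x⁴) / (4x³ + 3x⁵ + x⁷)`, and the relation between `α⁷` and `α₄`
becomes an identity between rational functions of `x` over the field with seven elements
(`final_identity`).
-/

noncomputable section
open Polynomial

instance : Fact (Nat.Prime 7) := ⟨by norm_num⟩


/-- The infinitesimal elements `|x| < 1`: those of positive order in `1/T`, including `0`
(whose `orderTop` is `⊤`). -/
def IsSmall (x : LaurentSeries (ZMod 7)) : Prop := 0 < x.orderTop

lemma isSmall_add {x y : LaurentSeries (ZMod 7)} (hx : IsSmall x) (hy : IsSmall y) :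
    IsSmall (x + y) :=
  lt_of_lt_of_le (lt_min hx hy) HahnSeries.min_orderTop_le_orderTop_add

lemma isSmall_mul {x y : LaurentSeries (ZMod 7)} (hx : 0 ≤ x.orderTop) (hy : IsSmall y) :
    IsSmall (x * y) := by
  unfold IsSmall at *
  rw [HahnSeries.orderTop_mul]
  exact lt_of_lt_of_le hy (le_add_of_nonneg_left hx)

lemma isSmall_sub {x y : LaurentSeries (ZMod 7)} (hx : IsSmall x) (hy : IsSmall y) :
    IsSmall (x - y) := by
  rw [sub_eq_add_neg]
  refine isSmall_add hx ?_
  unfold IsSmall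
  rwa [HahnSeries.orderTop_neg]

lemma orderTop_C {c : ZMod 7} (hc : c ≠ 0) :
    (HahnSeries.C c : LaurentSeries (ZMod 7)).orderTop = 0 :=
  HahnSeries.orderTop_single hc

lemma isSmall_inv {x : LaurentSeries (ZMod 7)} (hx : 0 < adeg x) : x ≠ 0 ∧ IsSmall x⁻¹ := by
  have h0 : x ≠ 0 := by
    rintro rfl
    simp [adeg] at hx
  have h1 : x⁻¹ ≠ 0 := inv_ne_zero h0
  have h2 := HahnSeries.order_mul h0 h1
  rw [mul_inv_cancel₀ h0, HahnSeries.order_one] at h2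
  refine ⟨h0, ?_⟩
  unfold IsSmall
  rw [← HahnSeries.order_eq_orderTop_of_ne_zero h1]
  unfold adeg at hx
  have : 0 < (x⁻¹).order := by omega
  exact_mod_cast this

/-- Dividing by an element of absolute value one preserves smallness. -/
lemma isSmall_div {x D : LaurentSeries (ZMod 7)} (hx : IsSmall x) (hD : D.orderTop = 0) :
    IsSmall (x / D) := by
  have h0 : D ≠ 0 := by
    rintro rfl
    simp at hD
  unfold IsSmall at *
  have h : (x / D * D).orderTop = (x / D).orderTop + D.orderTop := HahnSeries.orderTop_mul _ _
  rw [div_mul_cancel₀ _ h0, hD, add_zero] at h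
  rwa [← h]

lemma tval_eq : Tval (ZMod 7) = HahnSeries.single (-1 : ℤ) (1 : ZMod 7) := by
  unfold Tval
  rw [inv_eq_iff_eq_inv, eq_comm]
  apply inv_eq_of_mul_eq_one_left
  simp [HahnSeries.single_mul_single]

lemma coeff_pEval (p : (ZMod 7)[X]) (n : ℕ) : (pEval p).coeff (-(n : ℤ)) = p.coeff n := by
  induction p using Polynomial.induction_on' with
  | add p q hp hq =>
    unfold pEval at *
    rw [eval₂_add, HahnSeries.coeff_add, hp, hq, Polynomial.coeff_add]
  | monomial k c =>
    unfold pEval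
    rw [eval₂_monomial, tval_eq, HahnSeries.single_pow, Polynomial.coeff_monomial,
      HahnSeries.C_apply, HahnSeries.single_mul_single, HahnSeries.coeff_single]
    simp [eq_comm]

/-- A polynomial in `T` of absolute value less than one vanishes. -/
lemma eq_zero_of_isSmall_pEval {p : (ZMod 7)[X]} (h : IsSmall (pEval p)) : p = 0 := by
  ext n
  rw [← coeff_pEval, Polynomial.coeff_zero]
  apply HahnSeries.coeff_eq_zero_of_lt_orderTop
  refine lt_of_le_of_lt ?_ h
  exact_mod_cast (by omega : -(n : ℤ) ≤ 0)

/-- Uniqueness of one continued fraction step: the polynomial part and the small remainder of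
a series are determined by the series. -/
lemma step_unique {a p : (ZMod 7)[X]} {b c x : LaurentSeries (ZMod 7)} (hc : 0 < adeg c)
    (h : b = pEval a + c⁻¹) (h' : b = pEval p + x) (hx : IsSmall x) : a = p ∧ c⁻¹ = x := by
  have hs : pEval (a - p) = x - c⁻¹ := by
    have : pEval (a - p) = pEval a - pEval p := eval₂_sub _
    rw [this]
    linear_combination h' - h
  have hap : a = p := by
    apply sub_eq_zero.mp
    apply eq_zero_of_isSmall_pEval
    rw [hs]
    exact isSmall_sub hx (isSmall_inv hc).2
  refine ⟨hap, ?_⟩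
  subst hap
  linear_combination h' - h

lemma pEval_C_mul_X (c : ZMod 7) : pEval (C c * X) = HahnSeries.C c * Tval (ZMod 7) := by
  simp [pEval]

lemma seven_eq_zero : (7 : LaurentSeries (ZMod 7)) = 0 := by
  have h : (HahnSeries.C (7 : ZMod 7) : LaurentSeries (ZMod 7)) = 7 := map_ofNat _ 7
  rw [← h, show (7 : ZMod 7) = 0 from rfl, map_zero]

/-- For `x` small, `-2 + 2x² + x⁴` has absolute value one, the constant term dominating. -/
lemma orderTop_denom {x : LaurentSeries (ZMod 7)} (hx : IsSmall x) :
    (-2 + 2 * x ^ 2 + x ^ 4).orderTop = 0 := by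
  have h2 : (2 : LaurentSeries (ZMod 7)).orderTop = 0 := by
    have := orderTop_C (c := 2) (by decide)
    rwa [map_ofNat] at this
  have hxx : IsSmall (x * x) := isSmall_mul hx.le hx
  have hs : IsSmall (2 * (x * x) + x * x * (x * x)) :=
    isSmall_add (isSmall_mul h2.ge hxx) (isSmall_mul hxx.le hxx)
  have h : -2 + 2 * x ^ 2 + x ^ 4 = -2 + (2 * (x * x) + x * x * (x * x)) := by ring
  rw [h, HahnSeries.orderTop_add_eq_left, HahnSeries.orderTop_neg, h2]
  rw [HahnSeries.orderTop_neg, h2]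
  exact hs

/-- For `x` small, `1 + x²` has absolute value one. -/
lemma orderTop_one_add_sq {x : LaurentSeries (ZMod 7)} (hx : IsSmall x) :
    (1 + x ^ 2).orderTop = 0 := by
  have hxx : IsSmall (x ^ 2) := by
    rw [pow_two]
    exact isSmall_mul hx.le hx
  rw [HahnSeries.orderTop_add_eq_left, HahnSeries.orderTop_one]
  rwa [HahnSeries.orderTop_one]

lemma ne_zero_of_orderTop {x : LaurentSeries (ZMod 7)} (hx : x.orderTop = 0) : x ≠ 0 := by
  rintro rfl
  simp at hx

/-- The quartic equation, solved for `T` in terms of `α` and `x = 1/α`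
(in characteristic 7 one has `1/12 = 3`). -/
lemma solve_T {K : Type*} [Field K] (h7 : (7 : K) = 0) {α T : K} (h0 : α ≠ 0)
    (h : -α ^ 4 / 12 - T * α ^ 3 + α ^ 2 + 1 = 0) :
    T = 4 * α + α⁻¹ + α⁻¹ ^ 3 := by
  have h12 : (12 : K)⁻¹ = 3 := by
    apply inv_eq_of_mul_eq_one_left
    linear_combination 5 * h7
  rw [div_eq_mul_inv, h12] at h
  field_simp
  linear_combination -h - α ^ 4 * h7

/-- The rational function identity behind the relation between `α⁷` and `α₄`, where `α = 1/x`
and `b = α₄ = (-2 + 2x² + x⁴) / (4x³ + 3x⁵ + x⁷)`. -/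
lemma final_identity {K : Type*} [Field K] (h7 : (7 : K) = 0) {x T b : K} (hx : x ≠ 0)
    (hT : T = 4 * x⁻¹ + x + x ^ 3)
    (hb : b * (4 * x ^ 3 + 3 * x ^ 5 + x ^ 7) = -2 + 2 * x ^ 2 + x ^ 4)
    (hN : 4 * x ^ 3 + 3 * x ^ 5 + x ^ 7 ≠ 0) :
    x⁻¹ ^ 7 = 3 * (T ^ 2 - 1) ^ 2 * b + 5 * (5 * T ^ 3 + 6 * T) := by
  have hN' : 4 + 3 * x ^ 2 + x ^ 4 ≠ 0 := by
    intro h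
    apply hN
    linear_combination x ^ 3 * h
  have hxT : x * T = 4 + x ^ 2 + x ^ 4 := by
    rw [hT]
    field_simp
  have hbN : b * x ^ 3 * (4 + 3 * x ^ 2 + x ^ 4) = -2 + 2 * x ^ 2 + x ^ 4 := by
    linear_combination hb
  rw [inv_pow]
  apply inv_eq_of_mul_eq_one_right
  apply mul_right_cancel₀ hN'
  have key : x ^ 7 * (3 * (T ^ 2 - 1) ^ 2 * b + 5 * (5 * T ^ 3 + 6 * T)) *
      (4 + 3 * x ^ 2 + x ^ 4) =
      3 * ((x * T) ^ 2 - x ^ 2) ^ 2 * (b * x ^ 3 * (4 + 3 * x ^ 2 + x ^ 4)) +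
      x ^ 4 * (25 * (x * T) ^ 3 + 30 * x ^ 2 * (x * T)) * (4 + 3 * x ^ 2 + x ^ 4) := by ring
  -- After substituting `x * T` and `b`, the two sides differ by a multiple of `7`.
  rw [key, hbN, hxT]
  linear_combination -(
    220 - 27 * x ^ 2 - 927 * x ^ 4 - 1662 * x ^ 6 - 1855 * x ^ 8 - 1378 * x ^ 10 - 798 * x ^ 12
    - 334 * x ^ 14 - 112 * x ^ 16 - 24 * x ^ 18 - 4 * x ^ 20) * h7

/-- For the unique `α ∈ F(7)` with `|α| > 1` and
`−α⁴/12 − Tα³ + α² + 1 = 0`, the first three partial quotients are `(2T, 6T, 6T)` and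
`α⁷ = 3(T² − 1)² α₄ + 5(5T³ + 6T)`. -/
theorem stmt5 (α : LaurentSeries (ZMod 7)) (hdeg : 0 < adeg α)
    (hα : -α ^ 4 / 12 - Tval (ZMod 7) * α ^ 3 + α ^ 2 + 1 = 0)
    (a : ℕ → Polynomial (ZMod 7)) (β : ℕ → LaurentSeries (ZMod 7))
    (hcf : IsCFOf α a β) :
    a 1 = Polynomial.C 2 * Polynomial.X ∧
    a 2 = Polynomial.C 6 * Polynomial.X ∧
    a 3 = Polynomial.C 6 * Polynomial.X ∧
    α ^ 7 = 3 * (Tval (ZMod 7) ^ 2 - 1) ^ 2 * β 4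
          + 5 * (5 * Tval (ZMod 7) ^ 3 + 6 * Tval (ZMod 7)) := by
  have h7 := seven_eq_zero
  obtain ⟨hα1, hcf⟩ := hcf
  obtain ⟨-, -, h1⟩ := hcf 1 le_rfl
  obtain ⟨-, d2, h2⟩ := hcf 2 (by norm_num)
  obtain ⟨-, d3, h3⟩ := hcf 3 (by norm_num)
  obtain ⟨-, d4, -⟩ := hcf 4 (by norm_num)
  norm_num at h1 h2 h3
  rw [hα1] at h1
  obtain ⟨hα0, hs⟩ := isSmall_inv hdeg
  have hT := solve_T h7 hα0 hα
  obtain ⟨x, rfl⟩ : ∃ x, α = x⁻¹ := ⟨α⁻¹, (inv_inv α).symm⟩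
  rw [inv_inv] at hs hT
  have hx0 : x ≠ 0 := by simpa using hα0
  have hE := orderTop_one_add_sq hs
  have hD := orderTop_denom hs
  have hE0 := ne_zero_of_orderTop hE
  have hD0 := ne_zero_of_orderTop hD
  have hC : ∀ c : ZMod 7, 0 ≤ (HahnSeries.C c : LaurentSeries (ZMod 7)).orderTop := by
    intro c
    by_cases hc : c = 0
    · simp [hc]
    · exact (orderTop_C hc).ge
  have e2 : (HahnSeries.C (2 : ZMod 7) : LaurentSeries (ZMod 7)) = 2 := map_ofNat _ 2
  have e3 : (HahnSeries.C (3 : ZMod 7) : LaurentSeries (ZMod 7)) = 3 := map_ofNat _ 3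
  have e5 : (HahnSeries.C (5 : ZMod 7) : LaurentSeries (ZMod 7)) = 5 := map_ofNat _ 5
  have e6 : (HahnSeries.C (6 : ZMod 7) : LaurentSeries (ZMod 7)) = 6 := map_ofNat _ 6
  have p3 := hC 3
  have p5 := hC 5
  rw [e3] at p3
  rw [e5] at p5
  have hs3 : IsSmall (x ^ 3) := by
    rw [show x ^ 3 = x * x * x by ring]
    exact isSmall_mul (isSmall_mul hs.le hs).le hs
  -- `α - 2T = 5x + 5x³`
  obtain ⟨ha1, hb1⟩ := step_unique (p := C 2 * X) (x := 5 * x + 5 * x ^ 3) d2 h1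
    (by
      rw [pEval_C_mul_X, e2, hT]
      linear_combination -(x⁻¹ + x + x ^ 3) * h7)
    (isSmall_add (isSmall_mul p5 hs) (isSmall_mul p5 hs3))
  -- `1 / (5x + 5x³) - 6T = x + x³ - 3x / (1 + x²)`
  have hβ2 : β 2 = 3 / (x * (1 + x ^ 2)) := by
    rw [← inv_inv (β 2), hb1, inv_eq_iff_eq_inv, inv_div, eq_div_iff (by
      intro h
      have h2 : (3 : LaurentSeries (ZMod 7)) * 5 = 1 := by linear_combination 2 * h7
      rw [h, zero_mul] at h2
      exact zero_ne_one h2)]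
    linear_combination 2 * (x + x ^ 3) * h7
  obtain ⟨ha2, hb2⟩ := step_unique (p := C 6 * X) (x := x + x ^ 3 - 3 * x / (1 + x ^ 2)) d3 h2
    (by
      rw [pEval_C_mul_X, e6, hT, hβ2]
      field_simp
      linear_combination (-3 - 4 * x ^ 2 - 2 * x ^ 4 - x ^ 6) * h7)
    (isSmall_sub (isSmall_add hs hs3) (isSmall_div (isSmall_mul p3 hs) hE))
  -- `α₃ - 6T = x + x³ - (5x + 3x³) / (-2 + 2x² + x⁴)`
  have hβ3 : β 3 = (1 + x ^ 2) / (x * (-2 + 2 * x ^ 2 + x ^ 4)) := by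
    rw [← inv_inv (β 3), hb2, inv_eq_iff_eq_inv, inv_div]
    field_simp
    ring
  obtain ⟨ha3, hb3⟩ := step_unique (p := C 6 * X)
    (x := x + x ^ 3 - (5 * x + 3 * x ^ 3) / (-2 + 2 * x ^ 2 + x ^ 4)) d4 h3
    (by
      rw [pEval_C_mul_X, e6, hT, hβ3]
      have hM : (5 * x + 3 * x ^ 3) / (-2 + 2 * x ^ 2 + x ^ 4) * (-2 + 2 * x ^ 2 + x ^ 4) =
          5 * x + 3 * x ^ 3 := div_mul_cancel₀ _ hD0
      rw [div_eq_iff (mul_ne_zero hx0 hD0)]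
      have hxx : x⁻¹ * x = 1 := inv_mul_cancel₀ hx0
      linear_combination x * hM - 24 * (-2 + 2 * x ^ 2 + x ^ 4) * hxx +
        (7 - 6 * x ^ 2 - 3 * x ^ 4 - (x ^ 2 + x ^ 4) * (-2 + 2 * x ^ 2 + x ^ 4)) * h7)
    (isSmall_sub (isSmall_add hs hs3)
      (isSmall_div (isSmall_add (isSmall_mul p5 hs) (isSmall_mul p3 hs3)) hD))
  refine ⟨ha1, ha2, ha3, ?_⟩
  have hβ0 := (isSmall_inv d4).1
  have hN : (β 4)⁻¹ = (4 * x ^ 3 + 3 * x ^ 5 + x ^ 7) / (-2 + 2 * x ^ 2 + x ^ 4) := by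
    rw [hb3, eq_div_iff hD0, sub_mul, div_mul_cancel₀ _ hD0]
    linear_combination (-x - x ^ 3) * h7
  have hN0 : 4 * x ^ 3 + 3 * x ^ 5 + x ^ 7 ≠ 0 := by
    intro h
    rw [h, zero_div] at hN
    exact inv_ne_zero hβ0 hN
  refine final_identity h7 hx0 hT ?_ hN0
  rw [eq_div_iff hD0] at hN
  rw [← hN, mul_inv_cancel_left₀ hβ0]
end
end
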